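/- arXiv:1906.07169 — 3 statements merged into one kernel-verified Lean document; each statement's English description precedes it below -/
import Mathlib

section
/- As n → ∞, p(n) ∼ (1/(4n√3))·exp(π·√(2n/3)) (the Hardy–Ramanujan asymptotic formula for the number of integer partitions of n). -/
open Filter Asymptotics Topology

open Filter Topology

namespace HR

/-- The geometric series `1 + X^(k+1) + X^(2(k+1)) + ...`. -/
noncomputable def geo (k : ℕ) : PowerSeries ℝ :=
  PowerSeries.mk fun m => if (k + 1) ∣ m then 1 else 0

open scoped PowerSeries.WithPiTopology in
lemma geo_hasSum_formal (k : ℕ) :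
    HasSum (fun j : ℕ => (PowerSeries.X : PowerSeries ℝ) ^ ((k + 1) * j)) (geo k) := by
  rw [PowerSeries.WithPiTopology.hasSum_iff_hasSum_coeff]
  intro d
  simp only [PowerSeries.coeff_X_pow, geo, PowerSeries.coeff_mk]
  by_cases h : (k + 1) ∣ d
  · obtain ⟨e, rfl⟩ := h
    have : (fun i => if (k + 1) * e = (k + 1) * i then (1 : ℝ) else 0)
        = fun i => if i = e then 1 else 0 := by
      funext i
      have : ((k + 1) * e = (k + 1) * i) ↔ i = e := by
        rw [Nat.mul_right_inj (by omega)]; exact eq_comm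
      simp [this]
    rw [this]
    simpa using hasSum_ite_eq e (1 : ℝ)
  · have : (fun i => if d = (k + 1) * i then (1 : ℝ) else 0) = fun i => 0 := by
      funext i
      rw [if_neg]
      rintro rfl
      exact h (dvd_mul_right _ _)
    rw [this, if_neg h]
    exact hasSum_zero

/-- finite products of geometric series -/
noncomputable def S (N : ℕ) : PowerSeries ℝ := ∏ k ∈ Finset.range N, geo k

/-- the partition function, as a real number -/
noncomputable def p (n : ℕ) : ℝ := (Fintype.card (Nat.Partition n) : ℝ)

open scoped PowerSeries.WithPiTopology in
lemma S_tendsto (m : ℕ) :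
    Tendsto (fun N => PowerSeries.coeff m (S N)) atTop (𝓝 (p m)) := by
  have h := Nat.Partition.hasProd_powerSeriesMk_card_restricted ℝ (fun _ => True)
  have h2 := h.tendsto_prod_nat
  rw [PowerSeries.WithPiTopology.tendsto_iff_coeff_tendsto] at h2
  have h3 := h2 m
  have e : ∀ k : ℕ, (∑' j : ℕ, (PowerSeries.X : PowerSeries ℝ) ^ ((k + 1) * j)) = geo k :=
    fun k => (geo_hasSum_formal k).tsum_eq
  simp only [if_true, e] at h3
  simpa [S, p, Nat.Partition.restricted] using h3

lemma geo_nonneg (k m : ℕ) : 0 ≤ PowerSeries.coeff m (geo k) := by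
  simp only [geo, PowerSeries.coeff_mk]; split_ifs <;> norm_num

lemma S_nonneg (N m : ℕ) : 0 ≤ PowerSeries.coeff m (S N) := by
  induction N generalizing m with
  | zero => simp only [S, Finset.range_zero, Finset.prod_empty, PowerSeries.coeff_one]; split_ifs <;> norm_num
  | succ N ih =>
    rw [S, Finset.prod_range_succ, PowerSeries.coeff_mul]
    exact Finset.sum_nonneg fun i _ => mul_nonneg (ih _) (geo_nonneg _ _)

lemma S_mono (m : ℕ) : Monotone (fun N => PowerSeries.coeff m (S N)) := by
  refine monotone_nat_of_le_succ fun N => ?_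
  have : S (N + 1) = S N * geo N := by rw [S, Finset.prod_range_succ, S]
  simp only [this]
  rw [PowerSeries.coeff_mul]
  have h := Finset.single_le_sum (f := fun q : ℕ × ℕ => PowerSeries.coeff q.1 (S N) * PowerSeries.coeff q.2 (geo N))
    (s := Finset.HasAntidiagonal.antidiagonal m)
    (fun i _ => mul_nonneg (S_nonneg _ _) (geo_nonneg _ _)) (a := (m, 0)) (by simp)
  simpa [geo] using h

lemma S_le (N m : ℕ) : PowerSeries.coeff m (S N) ≤ p m :=
  (S_mono m).ge_of_tendsto (S_tendsto m) N

lemma p_nonneg (m : ℕ) : 0 ≤ p m := by unfold p; positivity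

/-- evaluation at `z`, with absolute convergence. -/
def Ev (A : PowerSeries ℝ) (z v : ℂ) : Prop :=
  (Summable fun m : ℕ => ‖((PowerSeries.coeff m A : ℝ) : ℂ) * z ^ m‖) ∧
    ∑' m : ℕ, ((PowerSeries.coeff m A : ℝ) : ℂ) * z ^ m = v

lemma Ev.mul {A B : PowerSeries ℝ} {z v w : ℂ} (h : Ev A z v) (h' : Ev B z w) :
    Ev (A * B) z (v * w) := by
  have e : ∀ n : ℕ, ∑ kl ∈ Finset.HasAntidiagonal.antidiagonal n,
      (((PowerSeries.coeff kl.1 A : ℝ) : ℂ) * z ^ kl.1) * (((PowerSeries.coeff kl.2 B : ℝ) : ℂ) * z ^ kl.2)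
      = ((PowerSeries.coeff n (A * B) : ℝ) : ℂ) * z ^ n := by
    intro n
    rw [PowerSeries.coeff_mul]
    push_cast
    rw [Finset.sum_mul]
    refine Finset.sum_congr rfl fun x hx => ?_
    rw [Finset.HasAntidiagonal.mem_antidiagonal] at hx
    rw [← hx, pow_add]; ring
  refine ⟨?_, ?_⟩
  · have := summable_norm_sum_mul_antidiagonal_of_summable_norm h.1 h'.1
    simpa only [e] using this
  · have := tsum_mul_tsum_eq_tsum_sum_antidiagonal_of_summable_norm h.1 h'.1
    rw [h.2, h'.2] at this
    simpa only [e] using this.symm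

lemma geo_ev (k : ℕ) {z : ℂ} (hz : ‖z‖ < 1) : Ev (geo k) z (1 - z ^ (k + 1))⁻¹ := by
  have hz' : ‖z ^ (k + 1)‖ < 1 := by
    rw [norm_pow]; exact pow_lt_one₀ (norm_nonneg _) hz (by omega)
  have inj : Function.Injective (fun j : ℕ => (k + 1) * j) := fun a b h => by
    simpa using h
  have hout : ∀ x ∉ Set.range (fun j : ℕ => (k + 1) * j),
      ((PowerSeries.coeff x (geo k) : ℝ) : ℂ) * z ^ x = 0 := by
    intro x hx
    have : ¬ (k + 1) ∣ x := by
      rintro ⟨e, rfl⟩; exact hx ⟨e, rfl⟩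
    simp [geo, this]
  have key : HasSum (fun m : ℕ => ((PowerSeries.coeff m (geo k) : ℝ) : ℂ) * z ^ m)
      (1 - z ^ (k + 1))⁻¹ := by
    rw [← inj.hasSum_iff hout]
    have : ((fun m : ℕ => ((PowerSeries.coeff m (geo k) : ℝ) : ℂ) * z ^ m) ∘ fun j : ℕ => (k + 1) * j)
        = fun j => (z ^ (k + 1)) ^ j := by
      funext j; simp [geo, pow_mul]
    rw [this]
    exact hasSum_geometric_of_norm_lt_one hz'
  exact ⟨key.summable.norm, key.tsum_eq⟩

/-- The Euler function. -/
noncomputable def P (q : ℂ) : ℂ := ∏' n : ℕ, (1 - q ^ (n + 1))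

lemma S_ev (N : ℕ) {z : ℂ} (hz : ‖z‖ < 1) :
    Ev (S N) z (∏ k ∈ Finset.range N, (1 - z ^ (k + 1)))⁻¹ := by
  induction N with
  | zero =>
    have e : ∀ m : ℕ, m ≠ 0 → ((PowerSeries.coeff m (S 0) : ℝ) : ℂ) * z ^ m = 0 := by
      intro m hm
      simp [S, PowerSeries.coeff_one, hm]
    have := hasSum_single 0 e
    refine ⟨this.summable.norm, ?_⟩
    rw [this.tsum_eq]; simp [S]
  | succ N ih =>
    rw [S, Finset.prod_range_succ, Finset.prod_range_succ, mul_inv]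
    exact ih.mul (geo_ev N hz)

lemma P_tendsto {z : ℂ} (hz : ‖z‖ < 1) :
    Tendsto (fun N => ∏ k ∈ Finset.range N, (1 - z ^ (k + 1))) atTop (𝓝 (P z)) :=
  (ModularForm.multipliable_one_sub_pow hz).hasProd.tendsto_prod_nat

lemma P_ne_zero {z : ℂ} (hz : ‖z‖ < 1) : P z ≠ 0 := by
  have := tprod_one_add_ne_zero_of_summable (f := fun n : ℕ ↦ -z ^ (n + 1)) ?_ ?_
  · simpa [P, sub_eq_add_neg] using this
  · intro i h
    have h1 : z ^ (i + 1) = 1 := by linear_combination -h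
    have h2 : ‖z ^ (i + 1)‖ < 1 := by
      rw [norm_pow]; exact pow_lt_one₀ (norm_nonneg _) hz (by omega)
    rw [h1] at h2; simp at h2
  · simpa using (summable_nat_add_iff 1).mpr (summable_geometric_of_lt_one (norm_nonneg _) hz)

lemma p_summable {r : ℝ} (h0 : 0 ≤ r) (h1 : r < 1) : Summable fun m : ℕ => p m * r ^ m := by
  have hr : ‖(r : ℂ)‖ < 1 := by simpa [abs_of_nonneg h0] using h1
  refine summable_of_sum_range_le (c := ‖(P r)⁻¹‖)
    (fun m => mul_nonneg (p_nonneg m) (pow_nonneg h0 m)) fun M => ?_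
  have h2 : Tendsto (fun N => ∑ m ∈ Finset.range M, PowerSeries.coeff m (S N) * r ^ m) atTop
      (𝓝 (∑ m ∈ Finset.range M, p m * r ^ m)) :=
    tendsto_finsetSum _ fun m _ => (S_tendsto m).mul_const _
  have h3 := ((P_tendsto hr).inv₀ (P_ne_zero hr)).norm
  refine le_of_tendsto_of_tendsto' h2 h3 fun N => ?_
  have h4 := S_ev N hr
  rw [← h4.2]
  have e : ∀ m : ℕ, ((PowerSeries.coeff m (S N) : ℝ) : ℂ) * (r : ℂ) ^ m
      = ((PowerSeries.coeff m (S N) * r ^ m : ℝ) : ℂ) := fun m => by push_cast; rfl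
  have nn : ∀ m : ℕ, 0 ≤ PowerSeries.coeff m (S N) * r ^ m :=
    fun m => mul_nonneg (S_nonneg _ _) (pow_nonneg h0 m)
  have hs : Summable fun m : ℕ => PowerSeries.coeff m (S N) * r ^ m := by
    have := h4.1
    refine this.congr fun m => ?_
    rw [e, Complex.norm_real, Real.norm_of_nonneg (nn m)]
  simp only [e]
  rw [← Complex.ofReal_tsum, Complex.norm_real, Real.norm_of_nonneg (tsum_nonneg nn)]
  exact hs.sum_le_tsum _ fun m _ => nn m

lemma p_hasSum {z : ℂ} (hz : ‖z‖ < 1) : HasSum (fun m : ℕ => (p m : ℂ) * z ^ m) (P z)⁻¹ := by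
  have hs := p_summable (norm_nonneg z) hz
  have hs' : Summable (fun m : ℕ => (p m : ℂ) * z ^ m) := by
    refine Summable.of_norm_bounded hs fun m => ?_
    rw [norm_mul, norm_pow, Complex.norm_real, Real.norm_of_nonneg (p_nonneg m)]
  have h1 : Tendsto (fun N => ∑' m : ℕ, ((PowerSeries.coeff m (S N) : ℝ) : ℂ) * z ^ m) atTop
      (𝓝 (∑' m : ℕ, (p m : ℂ) * z ^ m)) := by
    refine tendsto_tsum_of_dominated_convergence hs (fun m => ?_) (Eventually.of_forall fun N m => ?_)
    · exact ((Complex.continuous_ofReal.tendsto _).comp (S_tendsto m)).mul_const _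
    · rw [norm_mul, norm_pow, Complex.norm_real, Real.norm_of_nonneg (S_nonneg N m)]
      exact mul_le_mul_of_nonneg_right (S_le N m) (by positivity)
  have h2 := (P_tendsto hz).inv₀ (P_ne_zero hz)
  have h3 := tendsto_nhds_unique h1 (h2.congr fun N => (S_ev N hz).2.symm)
  rw [← h3]
  exact hs'.hasSum


lemma norm_exp_neg_lt {s : ℂ} (hs : 0 < s.re) : ‖Complex.exp (-s)‖ < 1 := by
  rw [Complex.norm_exp]; simpa using hs

lemma integral_exp_int (k : ℤ) :
    ∫ θ in (-Real.pi)..Real.pi, Complex.exp ((k : ℂ) * Complex.I * (θ : ℂ)) =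
      if k = 0 then (2 * Real.pi : ℂ) else 0 := by
  split_ifs with h
  · subst h
    simp
    ring
  · rw [integral_exp_mul_complex (by simp [h, Complex.I_ne_zero])]
    have : Complex.exp ((k : ℂ) * Complex.I * ((Real.pi : ℝ) : ℂ)) =
        Complex.exp ((k : ℂ) * Complex.I * ((-Real.pi : ℝ) : ℂ)) := by
      rw [Complex.exp_eq_exp_iff_exists_int]
      exact ⟨k, by push_cast; ring⟩
    rw [this]; simp

lemma coeff_integral (n : ℕ) {σ : ℝ} (hσ : 0 < σ) :
    ∫ θ in (-Real.pi)..Real.pi, (P (Complex.exp (-(σ + θ * Complex.I))))⁻¹ *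
      Complex.exp (n * (σ + θ * Complex.I)) = 2 * Real.pi * p n := by
  have hr : Real.exp (-σ) < 1 := by simpa using hσ
  have hsum := p_summable (Real.exp_pos (-σ)).le hr
  have key : HasSum (fun m : ℕ => ∫ θ in (-Real.pi)..Real.pi,
      ((p m : ℂ) * Complex.exp (-(σ + θ * Complex.I)) ^ m) * Complex.exp (n * (σ + θ * Complex.I)))
      (∫ θ in (-Real.pi)..Real.pi, (P (Complex.exp (-(σ + θ * Complex.I))))⁻¹ *
      Complex.exp (n * (σ + θ * Complex.I))) := by
    refine intervalIntegral.hasSum_integral_of_dominated_convergence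
      (fun m _ => p m * Real.exp (-σ) ^ m * Real.exp (n * σ)) (fun m => ?_) (fun m => ?_) ?_ ?_ ?_
    · exact Continuous.aestronglyMeasurable (by fun_prop)
    · refine Eventually.of_forall fun θ _ => le_of_eq ?_
      rw [norm_mul, norm_mul, norm_pow, Complex.norm_exp, Complex.norm_exp, Complex.norm_real,
        Real.norm_of_nonneg (p_nonneg m)]
      simp
    · exact Eventually.of_forall fun θ _ => hsum.mul_right _
    · exact intervalIntegrable_const
    · refine Eventually.of_forall fun θ _ => ?_
      exact (p_hasSum (norm_exp_neg_lt (by simpa using hσ))).mul_right _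
  have e : ∀ m : ℕ, (∫ θ in (-Real.pi)..Real.pi,
      ((p m : ℂ) * Complex.exp (-(σ + θ * Complex.I)) ^ m) * Complex.exp (n * (σ + θ * Complex.I)))
      = (p m * Complex.exp (((n : ℂ) - m) * σ)) * (if ((n : ℤ) - m) = 0 then (2 * Real.pi : ℂ) else 0) := by
    intro m
    rw [← integral_exp_int, ← intervalIntegral.integral_const_mul]
    congr 1
    funext θ
    rw [← Complex.exp_nat_mul, mul_assoc, mul_assoc, ← Complex.exp_add, ← Complex.exp_add]
    congr 2
    push_cast
    ring
  simp only [e] at key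
  have h2 := hasSum_single (f := fun m : ℕ => (p m * Complex.exp (((n : ℂ) - m) * σ)) *
    (if ((n : ℤ) - m) = 0 then (2 * Real.pi : ℂ) else 0)) n (by
      intro m hm
      rw [if_neg (by omega)]; simp)
  rw [key.unique h2]
  simp; ring

lemma sqrt_I_mul {w : ℂ} (hw : 0 < w.re) :
    Complex.sqrt (Complex.I * w) = Complex.sqrt Complex.I * Complex.sqrt w := by
  have hw0 : w ≠ 0 := by rintro rfl; simp at hw
  have ha : |w.arg| < Real.pi / 2 := by
    rw [Complex.abs_arg_lt_pi_div_two_iff]; exact Or.inl hw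
  have hlog : Complex.log (Complex.I * w) = Complex.log Complex.I + Complex.log w := by
    refine Complex.log_mul Complex.I_ne_zero hw0 ?_
    rw [Complex.arg_I]
    rw [abs_lt] at ha
    constructor <;> linarith [Real.pi_pos]
  unfold Complex.sqrt
  rw [Complex.cpow_def_of_ne_zero (mul_ne_zero Complex.I_ne_zero hw0),
    Complex.cpow_def_of_ne_zero Complex.I_ne_zero, Complex.cpow_def_of_ne_zero hw0, hlog,
    ← Complex.exp_add, add_mul]

lemma eta_eq (z : ℂ) : ModularForm.eta z =
    Complex.exp (2 * Real.pi * Complex.I * z / 24) * P (Complex.exp (2 * Real.pi * Complex.I * z)) := by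
  simp [ModularForm.eta, P, ModularForm.eta_q, Function.Periodic.qParam]

lemma modular {s : ℂ} (hs : 0 < s.re) :
    (P (Complex.exp (-s)))⁻¹ = Complex.sqrt (s / (2 * Real.pi)) *
      Complex.exp (Real.pi ^ 2 / (6 * s) - s / 24) *
      (P (Complex.exp (-(4 * Real.pi ^ 2 / s))))⁻¹ := by
  have hs0 : s ≠ 0 := by rintro rfl; simp at hs
  have hpi : (Real.pi : ℂ) ≠ 0 := by exact_mod_cast Real.pi_ne_zero
  have hw : 0 < (s / (2 * Real.pi)).re := by
    have : s / (2 * Real.pi) = s / ((2 * Real.pi : ℝ) : ℂ) := by push_cast; rfl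
    rw [this, Complex.div_ofReal_re]
    have := Real.pi_pos
    positivity
  have hz : Complex.I * (s / (2 * Real.pi)) ∈ UpperHalfPlane.upperHalfPlaneSet := by
    simpa [UpperHalfPlane.upperHalfPlaneSet] using hw
  have h := ModularForm.eta_comp_eq_csqrt_I_inv hz
  simp only [Function.comp, Pi.smul_apply, Pi.mul_apply, smul_eq_mul] at h
  rw [eta_eq, eta_eq, sqrt_I_mul hw] at h
  have hI : Complex.sqrt Complex.I ≠ 0 := by
    unfold Complex.sqrt; simp
  have e1 : 2 * Real.pi * Complex.I * (-1 / (Complex.I * (s / (2 * Real.pi)))) =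
      -(4 * Real.pi ^ 2 / s) := by
    field_simp
    ring
  have e2 : 2 * Real.pi * Complex.I * (Complex.I * (s / (2 * Real.pi))) = -s := by
    field_simp
    rw [Complex.I_sq]
  rw [e1, e2] at h
  have hre : 0 < (4 * Real.pi ^ 2 / s).re := by
    have : 4 * Real.pi ^ 2 / s = ((4 * Real.pi ^ 2 : ℝ) : ℂ) * s⁻¹ := by push_cast; rfl
    rw [this, Complex.re_ofReal_mul, Complex.inv_re]
    have := Real.pi_pos
    have := Complex.normSq_pos.mpr hs0
    positivity
  have hP1 := P_ne_zero (norm_exp_neg_lt hs)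
  have hP2 := P_ne_zero (norm_exp_neg_lt hre)
  have e3 : Complex.exp (Real.pi ^ 2 / (6 * s) - s / 24) =
      (Complex.exp (-(4 * Real.pi ^ 2 / s) / 24))⁻¹ * Complex.exp (-s / 24) := by
    rw [← Complex.exp_neg, ← Complex.exp_add]
    congr 1
    field_simp
    ring
  rw [e3]
  have hE := Complex.exp_ne_zero (-(4 * Real.pi ^ 2 / s) / 24)
  generalize Complex.exp (-(4 * Real.pi ^ 2 / s) / 24) = E at *
  field_simp at h ⊢
  linear_combination h


lemma factor_bound {w : ℂ} (hw : ‖w‖ < 1) :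
    (1 - ‖w‖) * Real.exp (‖w‖ - w.re) ≤ ‖1 - w‖ := by
  have h1 := Complex.hasSum_re (Complex.hasSum_taylorSeries_neg_log hw)
  have hw' : ‖((‖w‖ : ℝ) : ℂ)‖ < 1 := by simpa using hw
  have h2 := Complex.hasSum_re (Complex.hasSum_taylorSeries_neg_log hw')
  have h3 := h2.sub h1
  have hne : (1 - w) ≠ 0 := by
    intro h
    have : w = 1 := by linear_combination -h
    rw [this] at hw; simp at hw
  have hpos : 0 < ‖1 - w‖ := norm_pos_iff.mpr hne
  have e1 : ∀ n : ℕ, (((‖w‖ : ℝ) : ℂ) ^ n / n).re = ‖w‖ ^ n / n := by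
    intro n
    have : (((‖w‖ : ℝ) : ℂ) ^ n / n) = ((‖w‖ ^ n / n : ℝ) : ℂ) := by push_cast; rfl
    rw [this, Complex.ofReal_re]
  have h4 := le_hasSum h3 1 (by
    intro n _
    rw [e1, sub_nonneg]
    refine (Complex.re_le_norm _).trans ?_
    rw [norm_div, norm_pow]; simp)
  simp only [Complex.neg_re, Complex.log_re] at h4
  have e2 : ‖(1 : ℂ) - ((‖w‖ : ℝ) : ℂ)‖ = 1 - ‖w‖ := by
    rw [← Complex.ofReal_one, ← Complex.ofReal_sub, Complex.norm_real, Real.norm_of_nonneg]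
    linarith
  rw [e2] at h4
  simp at h4
  have h5 : ‖w‖ - w.re + Real.log (1 - ‖w‖) ≤ Real.log ‖1 - w‖ := by linarith
  have h6 := Real.exp_le_exp.mpr h5
  rw [Real.exp_add, Real.exp_log (by linarith), Real.exp_log hpos] at h6
  linarith

lemma P_lower {z : ℂ} (hz : ‖z‖ < 1) :
    ‖P (‖z‖ : ℝ)‖ * Real.exp (‖z‖ / (1 - ‖z‖) - (z / (1 - z)).re) ≤ ‖P z‖ := by
  have hr : ‖((‖z‖ : ℝ) : ℂ)‖ < 1 := by simpa using hz
  have hg : ∀ {x : ℂ}, ‖x‖ < 1 → HasSum (fun k : ℕ => x ^ (k + 1)) (x / (1 - x)) := by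
    intro x hx
    have := (hasSum_geometric_of_norm_lt_one hx).mul_left x
    simpa [pow_succ', div_eq_mul_inv] using this
  have h1 := Complex.hasSum_re (hg hz)
  have h2 := Complex.hasSum_re (hg hr)
  have e2 : (((‖z‖ : ℝ) : ℂ) / (1 - ((‖z‖ : ℝ) : ℂ))).re = ‖z‖ / (1 - ‖z‖) := by
    rw [← Complex.ofReal_one, ← Complex.ofReal_sub, ← Complex.ofReal_div, Complex.ofReal_re]
  rw [e2] at h2
  have h3 := (h2.sub h1).tendsto_sum_nat
  have h4 := (P_tendsto hr).norm.mul ((Real.continuous_exp.tendsto _).comp h3)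
  refine le_of_tendsto_of_tendsto' h4 (P_tendsto hz).norm fun N => ?_
  simp only [Function.comp]
  rw [norm_prod, norm_prod, Real.exp_sum, ← Finset.prod_mul_distrib]
  refine Finset.prod_le_prod (fun k _ => by positivity) fun k _ => ?_
  have hk : ‖z ^ (k + 1)‖ < 1 := by
    rw [norm_pow]; exact pow_lt_one₀ (norm_nonneg _) hz (by omega)
  have := factor_bound hk
  have e3 : ‖(1 : ℂ) - ((‖z‖ : ℝ) : ℂ) ^ (k + 1)‖ = 1 - ‖z ^ (k + 1)‖ := by
    rw [norm_pow, ← Complex.ofReal_one, ← Complex.ofReal_pow, ← Complex.ofReal_sub,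
      Complex.norm_real, Real.norm_of_nonneg]
    rw [norm_pow] at hk; linarith
  rw [e3]
  have e4 : (((‖z‖ : ℝ) : ℂ) ^ (k + 1)).re = ‖z ^ (k + 1)‖ := by
    rw [norm_pow, ← Complex.ofReal_pow, Complex.ofReal_re]
  rw [e4]
  exact this

lemma minor {σ θ : ℝ} (hσ : 0 < σ) (hr : 1 / 2 ≤ Real.exp (-σ)) (h1 : σ ≤ |θ|)
    (h2 : |θ| ≤ Real.pi) :
    ‖(P (Complex.exp (-(σ + θ * Complex.I))))⁻¹‖ ≤
      ‖(P (Complex.exp (-σ)))⁻¹‖ * Real.exp (-(1 / 25 / σ)) := by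
  set z := Complex.exp (-(σ + θ * Complex.I)) with hz
  set r := Real.exp (-σ) with hrdef
  have hzr : ‖z‖ = r := by rw [hz, Complex.norm_exp]; simp [hrdef]
  have hr1 : r < 1 := by rw [hrdef]; simpa using hσ
  have hz1 : ‖z‖ < 1 := by rw [hzr]; exact hr1
  have hrC : Complex.exp (-σ) = (r : ℂ) := by rw [hrdef]; push_cast; rfl
  have hL := P_lower hz1
  rw [hzr] at hL
  rw [hrC, norm_inv, norm_inv]
  have hP1 : 0 < ‖P z‖ := norm_pos_iff.mpr (P_ne_zero hz1)
  have hP2 : 0 < ‖P r‖ := norm_pos_iff.mpr (P_ne_zero (by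
    rw [Complex.norm_real, Real.norm_of_nonneg (by linarith)]; exact hr1))
  have hσr : 1 - r ≤ σ := by
    have := Real.add_one_le_exp (-σ); linarith
  have h1r : 0 < 1 - r := by linarith
  have hn : ‖1 - z‖ ^ 2 = 1 - 2 * r * Real.cos θ + r ^ 2 := by
    rw [← Complex.normSq_eq_norm_sq, Complex.normSq_apply]
    have hre : z.re = r * Real.cos θ := by
      rw [hz, Complex.exp_re]; simp [hrdef]
    have him : z.im = - (r * Real.sin θ) := by
      rw [hz, Complex.exp_im]; simp [hrdef]
    simp only [Complex.sub_re, Complex.sub_im, Complex.one_re, Complex.one_im, hre, him]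
    nlinarith [Real.sin_sq_add_cos_sq θ]
  have hcos := Real.cos_le_one_sub_mul_cos_sq h2
  have hpi : Real.pi ^ 2 < 10 := by nlinarith [Real.pi_lt_d2, Real.pi_pos]
  have hpi2 : 1 / 5 ≤ 2 / Real.pi ^ 2 := by
    rw [div_le_div_iff₀ (by norm_num) (by have := Real.pi_pos; positivity)]; linarith
  have hθ : (1 - r) ^ 2 ≤ θ ^ 2 := by
    rw [← sq_abs θ]; exact pow_le_pow_left₀ h1r.le (hσr.trans h1) 2
  have hc2 : Real.cos θ ≤ 1 - 1 / 5 * (1 - r) ^ 2 := by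
    have : 1 / 5 * (1 - r) ^ 2 ≤ 2 / Real.pi ^ 2 * θ ^ 2 :=
      mul_le_mul hpi2 hθ (by positivity) (by positivity)
    linarith
  have hlow : (1.09 * (1 - r)) ^ 2 ≤ ‖1 - z‖ ^ 2 := by
    rw [hn]
    nlinarith [mul_le_mul_of_nonneg_left hc2 (by linarith : 0 ≤ 2 * r), sq_nonneg (1 - r),
      mul_nonneg (sq_nonneg (1 - r)) (by linarith : 0 ≤ r - 1 / 2)]
  have hlow' : 1.09 * (1 - r) ≤ ‖1 - z‖ := by
    exact (sq_le_sq₀ (by linarith) (norm_nonneg _)).mp hlow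
  have hre : (z / (1 - z)).re ≤ r / (1.09 * (1 - r)) := by
    refine (Complex.re_le_norm _).trans ?_
    rw [norm_div, hzr]
    exact div_le_div_of_nonneg_left (by linarith) (by positivity) hlow'
  have hexp : 1 / 25 / σ ≤ r / (1 - r) - (z / (1 - z)).re := by
    have a1 : 1 / 25 / σ ≤ 1 / 25 / (1 - r) := div_le_div_of_nonneg_left (by norm_num) h1r hσr
    have a2 : r / (1.09 * (1 - r)) + 1 / 25 / (1 - r) ≤ r / (1 - r) := by
      rw [← div_div, ← add_div]
      refine div_le_div_of_nonneg_right ?_ h1r.le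
      norm_num
      linarith
    linarith
  have hE := Real.exp_le_exp.mpr hexp
  rw [Real.exp_neg, ← mul_inv]
  refine inv_anti₀ (by positivity) ?_
  exact (mul_le_mul_of_nonneg_left hE hP2.le).trans hL


/-- the radius parameter -/
noncomputable def sg (L : ℝ) : ℝ := Real.pi ^ 2 / (6 * L)

lemma sg_pos {L : ℝ} (hL : 0 < L) : 0 < sg L := by
  have := Real.pi_pos
  unfold sg; positivity

/-- the point `1 + i v / √L` -/
noncomputable def w (L v : ℝ) : ℂ := 1 + ((v / √L : ℝ) : ℂ) * Complex.I

lemma w_re (L v : ℝ) : (w L v).re = 1 := by simp [w]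

lemma w_im (L v : ℝ) : (w L v).im = v / √L := by simp [w]

lemma w_ne (L v : ℝ) : w L v ≠ 0 := by
  intro h
  have := w_re L v
  rw [h] at this; simp at this

lemma w_normSq (L v : ℝ) : Complex.normSq (w L v) = 1 + (v / √L) ^ 2 := by
  rw [Complex.normSq_apply, w_re, w_im]; ring

lemma w_inv_re (L v : ℝ) : (w L v)⁻¹.re = 1 / (1 + (v / √L) ^ 2) := by
  rw [Complex.inv_re, w_re, w_normSq]

/-- normalized integrand -/
noncomputable def H (L v : ℝ) : ℂ :=
  (P (Complex.exp (-(sg L * w L v))))⁻¹ * Complex.exp (L * w L v - 2 * L) /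
    ((√(sg L / (2 * Real.pi)) : ℝ) : ℂ)

lemma sqrt_real_mul {a : ℝ} (ha : 0 < a) {z : ℂ} (hz : z ≠ 0) :
    Complex.sqrt (a * z) = ((√a : ℝ) : ℂ) * Complex.sqrt z := by
  have ha' : (a : ℂ) ≠ 0 := by exact_mod_cast ha.ne'
  unfold Complex.sqrt
  rw [Complex.cpow_def_of_ne_zero (mul_ne_zero ha' hz), Complex.cpow_def_of_ne_zero hz,
    Complex.log_ofReal_mul ha hz, Real.sqrt_eq_rpow, Real.rpow_def_of_pos ha, Complex.ofReal_exp,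
    ← Complex.exp_add]
  congr 1
  push_cast
  ring

lemma H_eq {L : ℝ} (hL : 0 < L) (v : ℝ) :
    H L v = Complex.sqrt (w L v) * Complex.exp (-((v ^ 2 : ℝ) * (w L v)⁻¹)) *
      Complex.exp (-((sg L / 24 : ℝ) * w L v)) *
      (P (Complex.exp (-((24 * L : ℝ) * (w L v)⁻¹))))⁻¹ := by
  have hs := sg_pos hL
  have hpi := Real.pi_pos
  have hw := w_ne L v
  have ha : 0 < sg L / (2 * Real.pi) := by positivity
  have hre : 0 < ((sg L : ℂ) * w L v).re := by
    rw [Complex.re_ofReal_mul, w_re]; linarith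
  have hsC : (sg L : ℂ) = Real.pi ^ 2 / (6 * L) := by unfold sg; push_cast; rfl
  have hLC : (L : ℂ) ≠ 0 := by exact_mod_cast hL.ne'
  have hpiC : (Real.pi : ℂ) ≠ 0 := by exact_mod_cast hpi.ne'
  have hsL : (√L : ℂ) ^ 2 = L := by
    rw [← Complex.ofReal_pow, Real.sq_sqrt hL.le]
  have hsL0 : (√L : ℂ) ≠ 0 := by
    intro h; rw [h] at hsL; simp at hsL; exact hLC hsL.symm
  have hsq : (((√(sg L / (2 * Real.pi)) : ℝ)) : ℂ) ≠ 0 := by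
    exact_mod_cast (Real.sqrt_pos.mpr ha).ne'
  have e1 : (sg L : ℂ) * w L v / (2 * Real.pi) = ((sg L / (2 * Real.pi) : ℝ) : ℂ) * w L v := by
    push_cast; ring
  have e2 : (4 * (Real.pi : ℂ) ^ 2 / (sg L * w L v)) = (24 * L : ℝ) * (w L v)⁻¹ := by
    rw [hsC]; push_cast; field_simp; norm_num
  have e3 : Complex.exp (Real.pi ^ 2 / (6 * (sg L * w L v)) - sg L * w L v / 24) *
      Complex.exp (L * w L v - 2 * L) = Complex.exp (-((v ^ 2 : ℝ) * (w L v)⁻¹)) *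
      Complex.exp (-((sg L / 24 : ℝ) * w L v)) := by
    rw [← Complex.exp_add, ← Complex.exp_add]
    congr 1
    have e4 : (Real.pi : ℂ) ^ 2 / (6 * (sg L * w L v)) = L * (w L v)⁻¹ := by
      rw [hsC]; field_simp
    rw [e4]
    have e5 : (L : ℂ) * (w L v)⁻¹ + L * w L v - 2 * L = -((v ^ 2 : ℝ) * (w L v)⁻¹) := by
      have : (L : ℂ) * (w L v - 1) ^ 2 = -(v : ℂ) ^ 2 := by
        have : w L v - 1 = (v / √L : ℂ) * Complex.I := by simp [w]
        rw [this, mul_pow, Complex.I_sq, div_pow, hsL]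
        field_simp
      field_simp
      push_cast
      linear_combination this
    push_cast at e5 ⊢
    linear_combination e5
  unfold H
  rw [modular hre, e1, sqrt_real_mul ha hw, e2]
  rw [div_eq_iff hsq]
  linear_combination (((√(sg L / (2 * Real.pi)) : ℝ) : ℂ) * Complex.sqrt (w L v) *
    (P (Complex.exp (-((24 * L : ℝ) * (w L v)⁻¹))))⁻¹) * e3

lemma P_zero : P 0 = 1 := by simp [P]

lemma P_continuousAt {q : ℂ} (hq : ‖q‖ < 1) : ContinuousAt P q :=
  (ModularForm.differentiableOn_tprod_one_sub_pow.differentiableAt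
    (Metric.isOpen_ball.mem_nhds (by simpa using hq))).continuousAt

lemma Pinv_tendsto : Tendsto (fun q => (P q)⁻¹) (𝓝 0) (𝓝 1) := by
  have := (P_continuousAt (q := 0) (by simp)).tendsto.inv₀ (by simp [P_zero])
  simpa [P_zero] using this

lemma norm_sqrt_le {z : ℂ} (hz : ‖z‖ ≤ 2) : ‖Complex.sqrt z‖ ≤ 2 := by
  have h : Complex.sqrt z ^ 2 = z := by
    unfold Complex.sqrt
    exact_mod_cast Complex.cpow_nat_inv_pow z (n := 2) (by norm_num)
  have h2 : ‖Complex.sqrt z‖ ^ 2 ≤ 2 := by rw [← norm_pow, h]; exact hz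
  nlinarith [norm_nonneg (Complex.sqrt z)]

lemma norm_H {L v : ℝ} : ‖H L v‖ = ‖(P (Complex.exp (-(sg L * w L v))))⁻¹‖ *
    (Real.exp (-L) / √(sg L / (2 * Real.pi))) := by
  unfold H
  rw [norm_div, norm_mul, Complex.norm_exp, Complex.norm_real, Real.norm_of_nonneg (Real.sqrt_nonneg _)]
  have : ((L : ℂ) * w L v - 2 * L).re = -L := by
    simp [w_re]; ring
  rw [this]; ring

lemma H_major : ∀ᶠ L : ℝ in atTop, ∀ v : ℝ, |v / √L| ≤ 1 →
    ‖H L v‖ ≤ 4 * Real.exp (-(v ^ 2 / 2)) := by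
  have h1 : ∀ᶠ q : ℂ in 𝓝 0, ‖(P q)⁻¹‖ ≤ 2 := by
    have := Pinv_tendsto.norm.eventually_lt_const (u := 2) (by simp)
    exact this.mono fun _ h => h.le
  obtain ⟨δ, hδ, hball⟩ := Metric.eventually_nhds_iff.mp h1
  have h2 : Tendsto (fun L : ℝ => Real.exp (-(12 * L))) atTop (𝓝 0) :=
    Real.tendsto_exp_neg_atTop_nhds_zero.comp (tendsto_id.const_mul_atTop (by norm_num))
  filter_upwards [h2.eventually_lt_const hδ, eventually_gt_atTop 0] with L hL hL0 v hv
  have hu : (v / √L) ^ 2 ≤ 1 := by rw [← sq_abs]; exact pow_le_one₀ (abs_nonneg _) hv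
  have hinv : 1 / 2 ≤ (w L v)⁻¹.re := by
    rw [w_inv_re]
    exact div_le_div_of_nonneg_left (by norm_num) (by positivity) (by linarith)
  rw [H_eq hL0, norm_mul, norm_mul, norm_mul]
  have b1 : ‖Complex.sqrt (w L v)‖ ≤ 2 := by
    refine norm_sqrt_le ?_
    have : ‖w L v‖ ^ 2 ≤ 2 := by
      rw [← Complex.normSq_eq_norm_sq, w_normSq]; linarith
    nlinarith [norm_nonneg (w L v)]
  have b2 : ‖Complex.exp (-((v ^ 2 : ℝ) * (w L v)⁻¹))‖ ≤ Real.exp (-(v ^ 2 / 2)) := by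
    rw [Complex.norm_exp, Complex.neg_re, Complex.re_ofReal_mul]
    refine Real.exp_le_exp.mpr ?_
    nlinarith [mul_le_mul_of_nonneg_left hinv (sq_nonneg v)]
  have b3 : ‖Complex.exp (-((sg L / 24 : ℝ) * w L v))‖ ≤ 1 := by
    rw [Complex.norm_exp, Complex.neg_re, Complex.re_ofReal_mul, w_re]
    refine Real.exp_le_one_iff.mpr ?_
    have := sg_pos hL0
    linarith
  have b4 : ‖(P (Complex.exp (-((24 * L : ℝ) * (w L v)⁻¹))))⁻¹‖ ≤ 2 := by
    refine hball ?_
    rw [dist_zero_right, Complex.norm_exp, Complex.neg_re, Complex.re_ofReal_mul]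
    refine lt_of_le_of_lt (Real.exp_le_exp.mpr ?_) hL
    nlinarith
  calc _ ≤ 2 * Real.exp (-(v ^ 2 / 2)) * 1 * 2 := by gcongr
    _ = _ := by ring

lemma H_minor : ∀ᶠ L : ℝ in atTop, ∀ v : ℝ, 1 ≤ |v / √L| → |sg L * (v / √L)| ≤ Real.pi →
    ‖H L v‖ ≤ 4 * Real.exp (-(L / 50)) := by
  filter_upwards [H_major, eventually_ge_atTop 4] with L hmaj hL4 v hv1 hv2
  have hL : 0 < L := by linarith
  have hs := sg_pos hL
  have hpi := Real.pi_pos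
  have hpi2 : Real.pi ^ 2 < 10 := by nlinarith [Real.pi_lt_d2, Real.pi_pos]
  have hr : 1 / 2 ≤ Real.exp (-sg L) := by
    have h1 := Real.add_one_le_exp (-sg L)
    have h2 : sg L ≤ 1 / 2 := by
      unfold sg; rw [div_le_div_iff₀ (by positivity) (by norm_num)]; linarith
    linarith
  have h0 := hmaj 0 (by simp)
  have hmin := minor (σ := sg L) (θ := sg L * (v / √L)) hs hr (by
    rw [abs_mul, abs_of_pos hs]; nlinarith) hv2
  have e1 : (sg L : ℂ) + ((sg L * (v / √L) : ℝ) : ℂ) * Complex.I = sg L * w L v := by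
    unfold w; push_cast; ring
  have e2 : (sg L : ℂ) = sg L * w L 0 := by simp [w]
  rw [e1] at hmin
  nth_rewrite 2 [e2] at hmin
  have hex : Real.exp (-(1 / 25 / sg L)) ≤ Real.exp (-(L / 50)) := by
    refine Real.exp_le_exp.mpr (neg_le_neg ?_)
    unfold sg
    rw [div_div, div_le_div_iff₀ (by norm_num) (by positivity)]
    have : 25 * (Real.pi ^ 2 / (6 * L)) * L = 25 * Real.pi ^ 2 / 6 := by field_simp
    nlinarith
  rw [norm_H]
  rw [norm_H] at h0
  have hK : 0 ≤ Real.exp (-L) / √(sg L / (2 * Real.pi)) := by positivity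
  calc _ ≤ (‖(P (Complex.exp (-(sg L * w L 0))))⁻¹‖ * Real.exp (-(1 / 25 / sg L))) *
        (Real.exp (-L) / √(sg L / (2 * Real.pi))) := mul_le_mul_of_nonneg_right hmin hK
    _ = (‖(P (Complex.exp (-(sg L * w L 0))))⁻¹‖ * (Real.exp (-L) / √(sg L / (2 * Real.pi)))) *
        Real.exp (-(1 / 25 / sg L)) := by ring
    _ ≤ (4 * Real.exp (-((0 : ℝ) ^ 2 / 2))) * Real.exp (-(L / 50)) := by gcongr
    _ = _ := by simp

/-- half-length of the rescaled interval -/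
noncomputable def R (L : ℝ) : ℝ := Real.pi * √L / sg L

lemma H_bound : ∀ᶠ L : ℝ in atTop, ∀ v : ℝ,
    ‖(Set.Ioc (-R L) (R L)).indicator (H L) v‖ ≤ 15000000 * (1 + v ^ 2)⁻¹ := by
  filter_upwards [H_major, H_minor, eventually_ge_atTop 1] with L h1 h2 hL1 v
  have hL : 0 < L := by linarith
  have hs := sg_pos hL
  have hpi := Real.pi_pos
  have hsq : 0 < √L := Real.sqrt_pos.mpr hL
  by_cases hv : v ∈ Set.Ioc (-R L) (R L)
  swap
  · rw [Set.indicator_of_notMem hv, norm_zero]; positivity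
  rw [Set.indicator_of_mem hv]
  have hvR : |v| ≤ R L := abs_le.mpr ⟨hv.1.le, hv.2⟩
  rcases le_total (|v / √L|) 1 with h | h
  · refine (h1 v h).trans ?_
    rw [Real.exp_neg, ← div_eq_mul_inv, ← div_eq_mul_inv,
      div_le_div_iff₀ (Real.exp_pos _) (by positivity)]
    nlinarith [Real.add_one_le_exp (v ^ 2 / 2), sq_nonneg v]
  · refine (h2 v h ?_).trans ?_
    · rw [abs_mul, abs_div, abs_of_pos hs, abs_of_pos hsq]
      calc sg L * (|v| / √L) ≤ sg L * (R L / √L) := by gcongr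
        _ = Real.pi := by unfold R; field_simp
    · have hv2 : v ^ 2 ≤ 4 * L ^ 3 := by
        rw [← sq_abs]
        refine (pow_le_pow_left₀ (abs_nonneg _) hvR 2).trans ?_
        have : R L ^ 2 = 36 * L ^ 3 / Real.pi ^ 2 := by
          unfold R sg
          rw [div_pow, mul_pow, Real.sq_sqrt hL.le]
          field_simp
          ring
        rw [this, div_le_iff₀ (by positivity)]
        have : 9 ≤ Real.pi ^ 2 := by nlinarith [Real.pi_gt_three]
        nlinarith [pow_pos hL 3]
      have hexp : (L / 50) ^ 3 / 6 ≤ Real.exp (L / 50) := by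
        have := Real.pow_div_factorial_le_exp (L / 50) (by positivity) 3
        simpa [Nat.factorial] using this
      have hL3 : 1 ≤ L ^ 3 := one_le_pow₀ hL1
      rw [Real.exp_neg, ← div_eq_mul_inv, ← div_eq_mul_inv,
        div_le_div_iff₀ (Real.exp_pos _) (by positivity)]
      nlinarith

lemma H_continuous {L : ℝ} (hL : 0 < L) : Continuous (H L) := by
  have hs := sg_pos hL
  have hw : Continuous (fun v : ℝ => w L v) := by unfold w; fun_prop
  unfold H
  refine Continuous.div_const (Continuous.mul ?_ (by fun_prop)) _
  have hn : ∀ v, ‖Complex.exp (-(sg L * w L v))‖ < 1 := fun v =>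
    norm_exp_neg_lt (by rw [Complex.re_ofReal_mul, w_re]; linarith)
  refine Continuous.inv₀ ?_ fun v => P_ne_zero (hn v)
  refine continuous_iff_continuousAt.mpr fun v => ?_
  have h1 : ContinuousAt (fun v : ℝ => Complex.exp (-(sg L * w L v))) v := by fun_prop
  exact ContinuousAt.comp (g := P) (f := fun v : ℝ => Complex.exp (-(sg L * w L v)))
    (P_continuousAt (hn v)) h1

lemma H_tendsto (v : ℝ) : Tendsto (fun L => (Set.Ioc (-R L) (R L)).indicator (H L) v) atTop
    (𝓝 ((Real.exp (-1 * v ^ 2) : ℝ) : ℂ)) := by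
  have hpi := Real.pi_pos
  have hsqrt : Tendsto (fun L : ℝ => √L) atTop atTop := Real.tendsto_sqrt_atTop
  have hu : Tendsto (fun L : ℝ => v / √L) atTop (𝓝 0) := tendsto_const_nhds.div_atTop hsqrt
  have hw : Tendsto (fun L : ℝ => w L v) atTop (𝓝 1) := by
    have := ((Complex.continuous_ofReal.tendsto _).comp hu).mul_const Complex.I |>.const_add 1
    simpa [w] using this
  have hwi : Tendsto (fun L : ℝ => (w L v)⁻¹) atTop (𝓝 1) := by
    simpa using hw.inv₀ one_ne_zero
  have hsg : Tendsto sg atTop (𝓝 0) :=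
    tendsto_const_nhds.div_atTop (tendsto_id.const_mul_atTop (by norm_num))
  have hR : Tendsto R atTop atTop := by
    have h1 : Tendsto (fun L : ℝ => √L * L * (6 / Real.pi)) atTop atTop :=
      (hsqrt.atTop_mul_atTop₀ tendsto_id).atTop_mul_const (by positivity)
    refine h1.congr' ?_
    filter_upwards [eventually_gt_atTop 0] with L hL
    unfold R sg; field_simp
  have t1 : Tendsto (fun L => Complex.sqrt (w L v)) atTop (𝓝 1) := by
    have := (Complex.continuousAt_sqrt (z := 1) (by simp)).tendsto.comp hw
    have e : Complex.sqrt 1 = 1 := by simp [Complex.sqrt]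
    rw [e] at this
    exact this
  have t2 : Tendsto (fun L => Complex.exp (-((v ^ 2 : ℝ) * (w L v)⁻¹))) atTop
      (𝓝 (Complex.exp (-((v ^ 2 : ℝ) * 1)))) :=
    (Complex.continuous_exp.tendsto _).comp (hwi.const_mul _).neg
  have t3 : Tendsto (fun L => Complex.exp (-((sg L / 24 : ℝ) * w L v))) atTop (𝓝 1) := by
    have h1 : Tendsto (fun L => ((sg L / 24 : ℝ) : ℂ)) atTop (𝓝 0) := by
      have := (Complex.continuous_ofReal.tendsto _).comp (hsg.div_const 24)
      simpa [Function.comp_def] using this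
    have := (Complex.continuous_exp.tendsto _).comp (h1.mul hw).neg
    simpa [Function.comp_def] using this
  have t4 : Tendsto (fun L : ℝ => (P (Complex.exp (-((24 * L : ℝ) * (w L v)⁻¹))))⁻¹) atTop (𝓝 1) := by
    refine Pinv_tendsto.comp ?_
    rw [tendsto_zero_iff_norm_tendsto_zero]
    have e : ∀ L : ℝ, ‖Complex.exp (-((24 * L : ℝ) * (w L v)⁻¹))‖ =
        Real.exp (-((24 * L) * (w L v)⁻¹.re)) := by
      intro L
      rw [Complex.norm_exp, Complex.neg_re, Complex.re_ofReal_mul]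
    simp only [e]
    refine Real.tendsto_exp_neg_atTop_nhds_zero.comp ?_
    have h1 : Tendsto (fun L => (w L v)⁻¹.re) atTop (𝓝 1) :=
      (Complex.continuous_re.tendsto _).comp hwi
    exact (tendsto_id.const_mul_atTop (by norm_num : (0 : ℝ) < 24)).atTop_mul_pos one_pos h1
  have t := ((t1.mul t2).mul t3).mul t4
  have e : (1 : ℂ) * Complex.exp (-((v ^ 2 : ℝ) * 1)) * 1 * 1 = ((Real.exp (-1 * v ^ 2) : ℝ) : ℂ) := by
    push_cast; simp
  rw [e] at t
  refine t.congr' ?_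
  filter_upwards [eventually_gt_atTop 0, hR.eventually_gt_atTop |v|] with L hL hRv
  rw [Set.indicator_of_mem, H_eq hL]
  rw [abs_lt] at hRv
  exact ⟨hRv.1, hRv.2.le⟩

lemma T_tendsto : Tendsto (fun L => ∫ v, (Set.Ioc (-R L) (R L)).indicator (H L) v) atTop
    (𝓝 ((√Real.pi : ℝ) : ℂ)) := by
  have := MeasureTheory.tendsto_integral_filter_of_dominated_convergence
    (μ := MeasureTheory.volume) (l := atTop)
    (F := fun L v => (Set.Ioc (-R L) (R L)).indicator (H L) v)
    (f := fun v : ℝ => ((Real.exp (-1 * v ^ 2) : ℝ) : ℂ))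
    (fun v => 15000000 * (1 + v ^ 2)⁻¹) ?_ ?_ ?_ ?_
  · rw [integral_complex_ofReal, integral_gaussian] at this
    simpa using this
  · filter_upwards [eventually_gt_atTop 0] with L hL
    exact (H_continuous hL).aestronglyMeasurable.indicator measurableSet_Ioc
  · filter_upwards [H_bound] with L h
    exact Eventually.of_forall h
  · exact integrable_inv_one_add_sq.const_mul _
  · exact Eventually.of_forall H_tendsto


lemma p_formula {n : ℕ} {L : ℝ} (hL : 0 < L) (hn : (n : ℝ) = 6 * L ^ 2 / Real.pi ^ 2) :
    (p n : ℂ) = ((1 / (4 * n * √3) * Real.exp (2 * L) / √Real.pi : ℝ) : ℂ) *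
      ∫ v, (Set.Ioc (-R L) (R L)).indicator (H L) v := by
  have hs := sg_pos hL
  have hpi := Real.pi_pos
  have hsq : 0 < √L := Real.sqrt_pos.mpr hL
  have hR : 0 < R L := by unfold R; positivity
  have hns : (n : ℝ) * sg L = L := by rw [hn]; unfold sg; field_simp
  have ha : 0 < sg L / (2 * Real.pi) := by positivity
  have hA : 0 < √(sg L / (2 * Real.pi)) := Real.sqrt_pos.mpr ha
  set A := √(sg L / (2 * Real.pi)) with hAdef
  set c := sg L / √L with hc
  have hc0 : 0 < c := by positivity
  have h1 := coeff_integral n hs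
  have hcR : c * R L = Real.pi := by rw [hc]; unfold R; field_simp
  have hcR' : c * (-R L) = -Real.pi := by rw [mul_neg, hcR]
  have h2 := intervalIntegral.integral_comp_mul_left (a := -R L) (b := R L) (c := c)
    (fun θ : ℝ => (P (Complex.exp (-(sg L + θ * Complex.I))))⁻¹ *
      Complex.exp (n * (sg L + θ * Complex.I))) hc0.ne'
  rw [hcR, hcR', h1] at h2
  have h3 : ∀ v : ℝ, (P (Complex.exp (-(sg L + (c * v : ℝ) * Complex.I))))⁻¹ *
      Complex.exp (n * (sg L + (c * v : ℝ) * Complex.I)) =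
      ((A * Real.exp (2 * L) : ℝ) : ℂ) * H L v := by
    intro v
    have e1 : (sg L : ℂ) + ((c * v : ℝ) : ℂ) * Complex.I = sg L * w L v := by
      rw [hc]; unfold w; push_cast; ring
    have e2 : (n : ℂ) * (sg L * w L v) = L * w L v := by
      have : (n : ℂ) * sg L = L := by exact_mod_cast hns
      rw [← mul_assoc, this]
    have e3 : Complex.exp (L * w L v) =
        Complex.exp (L * w L v - 2 * L) * Complex.exp (2 * L) := by
      rw [← Complex.exp_add]; congr 1; ring
    have hAC : (A : ℂ) ≠ 0 := by exact_mod_cast hA.ne'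
    rw [e1, e2, e3]
    unfold H
    rw [← hAdef]
    push_cast
    field_simp
  simp only [h3] at h2
  rw [intervalIntegral.integral_const_mul, intervalIntegral.integral_of_le (by linarith),
    ← MeasureTheory.integral_indicator measurableSet_Ioc] at h2
  set T := ∫ v, (Set.Ioc (-R L) (R L)).indicator (H L) v
  have h4 : (p n : ℂ) = ((c * A * Real.exp (2 * L) / (2 * Real.pi) : ℝ) : ℂ) * T := by
    rw [Complex.real_smul] at h2
    have hcC : (c : ℂ) ≠ 0 := by exact_mod_cast hc0.ne'
    have hpC : (Real.pi : ℂ) ≠ 0 := by exact_mod_cast hpi.ne'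
    push_cast at h2 ⊢
    field_simp at h2 ⊢
    linear_combination -h2
  rw [h4]
  congr 2
  have hAval : A = √Real.pi / (2 * √3 * √L) := by
    have e : sg L / (2 * Real.pi) = (√Real.pi / (2 * √3 * √L)) ^ 2 := by
      rw [div_pow, mul_pow, mul_pow, Real.sq_sqrt hpi.le, Real.sq_sqrt (by norm_num),
        Real.sq_sqrt hL.le]
      unfold sg; field_simp; norm_num
    rw [hAdef, e, Real.sqrt_sq (by positivity)]
  rw [hAval, hc, hn]
  unfold sg
  have hp2 : √Real.pi ^ 2 = Real.pi := Real.sq_sqrt hpi.le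
  have hL2 : √L ^ 2 = L := Real.sq_sqrt hL.le
  have hsp : 0 < √Real.pi := Real.sqrt_pos.mpr hpi
  have h30 : 0 < √3 := by positivity
  field_simp
  rw [hp2, hL2]
  ring

end HR

/-- **The Hardy–Ramanujan formula**: the number `p(n)` of partitions of `n` satisfies
`p(n) ∼ (1/(4n√3))·exp(π√(2n/3))` as `n → ∞`. -/
theorem hardy_ramanujan :
    Asymptotics.IsEquivalent atTop
      (fun n : ℕ => (Fintype.card (Nat.Partition n) : ℝ))
      (fun n : ℕ =>
        1 / (4 * n * Real.sqrt 3) * Real.exp (Real.pi * Real.sqrt (2 * n / 3))) := by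
  have hpi := Real.pi_pos
  have hL : Tendsto (fun n : ℕ => Real.pi * √((n : ℝ) / 6)) atTop atTop :=
    (Real.tendsto_sqrt_atTop.comp
      (tendsto_natCast_atTop_atTop.atTop_div_const (by norm_num))).const_mul_atTop hpi
  have hT := (HR.T_tendsto.comp hL).div_const ((√Real.pi : ℝ) : ℂ)
  have hsp : 0 < √Real.pi := Real.sqrt_pos.mpr hpi
  rw [div_self (by exact_mod_cast hsp.ne')] at hT
  have hTr := (Complex.continuous_re.tendsto _).comp hT
  rw [Asymptotics.isEquivalent_iff_exists_eq_mul]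
  rw [Complex.one_re] at hTr
  refine ⟨_, hTr, ?_⟩
  filter_upwards [eventually_gt_atTop 0] with n hn
  have hn' : (0 : ℝ) < n := by exact_mod_cast hn
  have hL0 : 0 < Real.pi * √((n : ℝ) / 6) := by positivity
  have h := HR.p_formula (n := n) hL0 (by
    rw [mul_pow, Real.sq_sqrt (by positivity)]; field_simp)
  have e : 2 * (Real.pi * √((n : ℝ) / 6)) = Real.pi * √(2 * n / 3) := by
    have : √(2 * (n : ℝ) / 3) = 2 * √((n : ℝ) / 6) := by
      rw [show 2 * (n : ℝ) / 3 = 2 ^ 2 * (n / 6) by ring, Real.sqrt_mul (by norm_num),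
        Real.sqrt_sq (by norm_num)]
    rw [this]; ring
  rw [e] at h
  have h2 := congrArg Complex.re h
  rw [Complex.ofReal_re, Complex.re_ofReal_mul] at h2
  simp only [Pi.mul_apply, Function.comp, Complex.div_ofReal_re]
  change HR.p n = _
  rw [h2]
  ring
end

section
/- There exists a constant c₁ with 0 < c₁ < 1 such that, as d → 0⁺, log g(e^{−d}) = ζ(2)/d + (1/2)·log d − (1/2)·log(2π) + O(d^{c₁}); equivalently, g(e^{−d}) = exp(π²/(6d))·√(d/(2π))·(1 + O(d^{c₁})). -/
open Filter Asymptotics Topology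

/-- `gR x = ∏_{j≥1} (1 − x^j)⁻¹`, the Euler partition generating function, for `|x| < 1`. -/
noncomputable def gR (x : ℝ) : ℝ := ∏' j : ℕ, (1 - x ^ (j + 1))⁻¹

/-- The complex Euler product. -/
noncomputable def eulerP (q : ℂ) : ℂ := ∏' n : ℕ, (1 - q ^ (n + 1))

lemma eta_norm_aux (t : ℝ) :
    ‖ModularForm.eta (t * Complex.I)‖ =
      Real.exp (-(Real.pi * t / 12)) * ‖eulerP (Real.exp (-(2 * Real.pi * t)) : ℝ)‖ := by
  unfold ModularForm.eta eulerP
  rw [norm_mul]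
  have h1 : Function.Periodic.qParam 1 (t * Complex.I) = ((Real.exp (-(2 * Real.pi * t)) : ℝ) : ℂ) := by
    simp only [Function.Periodic.qParam]
    push_cast
    congr 1
    linear_combination (2 * Real.pi * t : ℂ) * Complex.I_sq
  have h2 : Function.Periodic.qParam 24 (t * Complex.I) = ((Real.exp (-(Real.pi * t / 12)) : ℝ) : ℂ) := by
    simp only [Function.Periodic.qParam]
    push_cast
    congr 1
    linear_combination (Real.pi * t / 12 : ℂ) * Complex.I_sq
  congr 1
  · rw [h2, Complex.norm_real, Real.norm_of_nonneg (Real.exp_pos _).le]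
  · simp only [ModularForm.eta_q, h1]

lemma sqrt_norm_aux {z : ℂ} (hz : z ≠ 0) :
    ‖Complex.sqrt z‖ = Real.exp (Real.log ‖z‖ / 2) := by
  rw [Complex.sqrt, Complex.cpow_def_of_ne_zero hz, Complex.norm_exp]
  congr 1
  simp [Complex.log_re, div_eq_mul_inv]

lemma eulerP_ne_zero {x : ℝ} (h0 : 0 ≤ x) (h1 : x < 1) : eulerP (x : ℂ) ≠ 0 := by
  unfold eulerP
  refine tprod_one_add_ne_zero_of_summable (f := fun n : ℕ ↦ -(x : ℂ) ^ (n + 1)) ?_ ?_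
  · intro i h
    have : (1 : ℝ) - x ^ (i + 1) = 0 := by
      exact_mod_cast (by simpa [sub_eq_add_neg] using h : (1 : ℂ) - (x : ℂ) ^ (i + 1) = 0)
    have := pow_lt_one₀ h0 h1 (Nat.succ_ne_zero i)
    simp only [Nat.succ_eq_add_one] at this
    linarith
  · have := (summable_nat_add_iff 1).mpr (summable_geometric_of_lt_one h0 h1)
    simpa [abs_of_nonneg h0] using this

lemma log_gR_aux {x : ℝ} (h0 : 0 ≤ x) (h1 : x < 1) :
    Real.log (gR x) = -Real.log ‖eulerP (x : ℂ)‖ := by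
  have hx : ‖(x : ℂ)‖ < 1 := by simpa [abs_of_nonneg h0] using h1
  have hm := ModularForm.multipliable_one_sub_pow hx
  have hne : ‖eulerP (x : ℂ)‖ ≠ 0 := norm_ne_zero_iff.mpr (eulerP_ne_zero h0 h1)
  have hp : HasProd (fun n : ℕ ↦ 1 - x ^ (n + 1)) ‖eulerP (x : ℂ)‖ := by
    have h := hm.hasProd.norm
    change HasProd _ ‖eulerP (x : ℂ)‖ at h
    refine Eq.mp (congrArg (fun f ↦ HasProd f ‖eulerP (x : ℂ)‖) (funext fun n ↦ ?_)) h
    have : (0 : ℝ) ≤ 1 - x ^ (n + 1) := sub_nonneg.mpr (pow_le_one₀ h0 h1.le)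
    rw [← Complex.ofReal_pow, ← Complex.ofReal_one, ← Complex.ofReal_sub, Complex.norm_real,
      Real.norm_of_nonneg this]
  have := (hp.inv₀ hne).tprod_eq
  rw [gR, this, Real.log_inv]

lemma log_eulerP_isBigO :
    (fun q : ℂ ↦ Real.log ‖eulerP q‖) =O[𝓝 0] (fun q : ℂ ↦ q) := by
  have hd : DifferentiableAt ℂ eulerP 0 :=
    ModularForm.differentiableOn_tprod_one_sub_pow.differentiableAt
      (Metric.ball_mem_nhds 0 one_pos)
  have hP0 : eulerP 0 = 1 := by simp [eulerP]
  have hl : DifferentiableAt ℂ (fun q ↦ Complex.log (eulerP q)) 0 :=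
    hd.clog (by rw [hP0]; exact Complex.one_mem_slitPlane)
  have h := hl.isBigO_sub
  simp only [hP0, Complex.log_one, sub_zero] at h
  have h2 : (fun q : ℂ ↦ Real.log ‖eulerP q‖) =O[𝓝 0] (fun q ↦ Complex.log (eulerP q)) := by
    refine IsBigO.of_bound 1 (Eventually.of_forall fun q ↦ ?_)
    rw [← Complex.log_re, one_mul]
    exact Complex.abs_re_le_norm _
  exact h2.trans h

lemma log_gR_eq {d : ℝ} (hd : 0 < d) :
    Real.log (gR (Real.exp (-d))) -
      (Real.pi ^ 2 / 6 / d + (1 / 2) * Real.log d - (1 / 2) * Real.log (2 * Real.pi)) =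
    -(d / 24) - Real.log ‖eulerP (Real.exp (-(4 * Real.pi ^ 2 / d)) : ℝ)‖ := by
  have hpi := Real.pi_pos
  have hlt (x : ℝ) (hx : 0 < x) : Real.exp (-x) < 1 := by simpa using hx
  rw [log_gR_aux (Real.exp_pos _).le (hlt d hd)]
  set t : ℝ := d / (2 * Real.pi) with ht
  have htp : 0 < t := by positivity
  have hz : ((t : ℂ) * Complex.I) ∈ UpperHalfPlane.upperHalfPlaneSet := by
    simpa [UpperHalfPlane.upperHalfPlaneSet] using htp
  have hS := ModularForm.eta_comp_eq_csqrt_I_inv hz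
  have htne : (t : ℂ) ≠ 0 := by exact_mod_cast htp.ne'
  have hinv : -1 / ((t : ℂ) * Complex.I) = ((t⁻¹ : ℝ) : ℂ) * Complex.I := by
    push_cast
    field_simp
    simp
  simp only [Function.comp, hinv, Pi.smul_apply, Pi.mul_apply, smul_eq_mul] at hS
  have hN := congrArg (fun z ↦ Real.log ‖z‖) hS
  simp only [norm_mul, norm_inv, sqrt_norm_aux Complex.I_ne_zero,
    sqrt_norm_aux (mul_ne_zero htne Complex.I_ne_zero), eta_norm_aux] at hN
  have e1 : 2 * Real.pi * t = d := by rw [ht]; field_simp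
  have e2 : 2 * Real.pi * t⁻¹ = 4 * Real.pi ^ 2 / d := by rw [ht]; field_simp; ring
  have n1 : ‖eulerP (Real.exp (-d) : ℝ)‖ ≠ 0 :=
    norm_ne_zero_iff.mpr (eulerP_ne_zero (Real.exp_pos _).le (hlt d hd))
  have n2 : ‖eulerP (Real.exp (-(4 * Real.pi ^ 2 / d)) : ℝ)‖ ≠ 0 :=
    norm_ne_zero_iff.mpr (eulerP_ne_zero (Real.exp_pos _).le (hlt _ (by positivity)))
  rw [e1, e2] at hN
  simp only [Complex.norm_I, Complex.norm_real, Real.norm_of_nonneg htp.le, Real.log_one, zero_div,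
    Real.exp_zero, inv_one, one_mul, mul_one] at hN
  rw [Real.log_mul (Real.exp_ne_zero _) n2, Real.log_mul (Real.exp_ne_zero _)
    (mul_ne_zero (Real.exp_ne_zero _) n1), Real.log_mul (Real.exp_ne_zero _) n1,
    Real.log_exp, Real.log_exp, Real.log_exp] at hN
  have e3 : Real.log t = Real.log d - Real.log (2 * Real.pi) := by
    rw [ht, Real.log_div hd.ne' (by positivity)]
  have e4 : Real.pi * t / 12 = d / 24 := by rw [← e1]; ring
  have e5 : Real.pi * t⁻¹ / 12 = Real.pi ^ 2 / 6 / d := by rw [ht]; field_simp; ring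
  rw [e3, e4, e5] at hN
  linarith

/-- **Meinardus' lemma for the Euler product** (Remark 4 of the paper): there is a
constant `0 < c₁ < 1` such that, as `d → 0⁺`,
`log g(e^{−d}) = ζ(2)/d + (1/2)·log d − (1/2)·log(2π) + O(d^{c₁})`, with `ζ(2) = π²/6`. -/
theorem log_euler_product_asymptotics :
    ∃ c₁ : ℝ, 0 < c₁ ∧ c₁ < 1 ∧
      (fun d : ℝ =>
          Real.log (gR (Real.exp (-d))) -
            (Real.pi ^ 2 / 6 / d + (1 / 2) * Real.log d - (1 / 2) * Real.log (2 * Real.pi)))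
        =O[nhdsWithin 0 (Set.Ioi 0)] (fun d : ℝ => d ^ c₁) := by
  refine ⟨1 / 2, by norm_num, by norm_num, ?_⟩
  have hd1 : (fun d : ℝ ↦ d) =O[𝓝[>] 0] (fun d : ℝ ↦ d ^ (1 / 2 : ℝ)) := by
    refine IsBigO.of_bound 1 ?_
    filter_upwards [Ioo_mem_nhdsGT (zero_lt_one (α := ℝ))] with d hd
    rw [Real.norm_of_nonneg hd.1.le, Real.norm_of_nonneg (Real.rpow_nonneg hd.1.le _), one_mul]
    simpa using Real.rpow_le_rpow_of_exponent_ge hd.1 hd.2.le (by norm_num : (1 / 2 : ℝ) ≤ 1)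
  have hexp : ∀ d : ℝ, 0 < d → Real.exp (-(4 * Real.pi ^ 2 / d)) ≤ d := by
    intro d hd
    have h3 := Real.pi_gt_three
    have h1 : 1 / d ≤ 4 * Real.pi ^ 2 / d := by gcongr; nlinarith
    have h2 := Real.add_one_le_exp (4 * Real.pi ^ 2 / d)
    rw [Real.exp_neg]
    calc (Real.exp (4 * Real.pi ^ 2 / d))⁻¹ ≤ (1 / d)⁻¹ := by
          apply inv_anti₀ (by positivity); linarith
      _ = d := by simp
  have ht0 : Tendsto (fun d : ℝ ↦ Real.exp (-(4 * Real.pi ^ 2 / d))) (𝓝[>] 0) (𝓝 0) := by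
    refine squeeze_zero' (g := fun d ↦ d) (Eventually.of_forall fun d ↦ (Real.exp_pos _).le) ?_
      (tendsto_nhdsWithin_of_tendsto_nhds tendsto_id)
    filter_upwards [self_mem_nhdsWithin] with d hd using hexp d hd
  have ht : Tendsto (fun d : ℝ ↦ ((Real.exp (-(4 * Real.pi ^ 2 / d)) : ℝ) : ℂ)) (𝓝[>] 0) (𝓝 0) := by
    have := (Complex.continuous_ofReal.tendsto 0).comp ht0
    simpa only [Complex.ofReal_zero, Function.comp_def] using this
  have hlog := log_eulerP_isBigO.comp_tendsto ht
  have hlog2 : (fun d : ℝ ↦ ((Real.exp (-(4 * Real.pi ^ 2 / d)) : ℝ) : ℂ))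
      =O[𝓝[>] 0] (fun d : ℝ ↦ d) := by
    refine IsBigO.of_bound 1 ?_
    filter_upwards [self_mem_nhdsWithin] with d hd
    have hd' : (0 : ℝ) < d := hd
    rw [Complex.norm_real, Real.norm_of_nonneg (Real.exp_pos _).le, Real.norm_of_nonneg hd'.le,
      one_mul]
    exact hexp d hd'
  have hmain : (fun d : ℝ ↦ -(d / 24) -
      Real.log ‖eulerP (Real.exp (-(4 * Real.pi ^ 2 / d)) : ℝ)‖) =O[𝓝[>] 0] (fun d : ℝ ↦ d) := by
    refine IsBigO.sub ?_ (hlog.trans hlog2)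
    have := (isBigO_refl (fun d : ℝ ↦ d) (𝓝[>] 0)).const_mul_left (-(1 / 24))
    refine this.congr_left fun d ↦ by ring
  refine (hmain.trans hd1).congr' ?_ EventuallyEq.rfl
  filter_upwards [self_mem_nhdsWithin] with d hd
  exact (log_gR_eq hd).symm
end

section
/- Let d_n be the unique positive solution of Σ_{j=1}^∞ j·e^{−jd}/(1 − e^{−jd}) = n and let b_n = Σ_{j=1}^∞ j²·e^{−j d_n}/(1 − e^{−j d_n})². For every sequence ω(n) → ∞, setting δ_n = d_n^{4/3}/ω(n), one has, uniformly for |θ| ≤ δ_n as n → ∞, e^{−iθn}·g(e^{−d_n + iθ})/g(e^{−d_n}) = e^{−θ²·b_n/2}·(1 + O(1/ω(n)³)). -/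
open Filter Asymptotics Topology

/-- `aFun d = Σ_{j≥1} j·e^{−jd}/(1 − e^{−jd})`. -/
noncomputable def aFun (d : ℝ) : ℝ :=
  ∑' j : ℕ, (j + 1 : ℝ) * Real.exp (-(j + 1) * d) / (1 - Real.exp (-(j + 1) * d))

/-- `bFun d = Σ_{j≥1} j²·e^{−jd}/(1 − e^{−jd})²`. -/
noncomputable def bFun (d : ℝ) : ℝ :=
  ∑' j : ℕ, (j + 1 : ℝ) ^ 2 * Real.exp (-(j + 1) * d) / (1 - Real.exp (-(j + 1) * d)) ^ 2

/-- `gC x = ∏_{j≥1} (1 − x^j)⁻¹` (complex Euler product), for `|x| < 1`. -/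
noncomputable def gC (x : ℂ) : ℂ := ∏' j : ℕ, (1 - x ^ (j + 1))⁻¹

/-- `r/(1-r)` for `r = e^{-(j+1)d}`. -/
noncomputable def pTerm (d : ℝ) (j : ℕ) : ℝ :=
  Real.exp (-(j + 1) * d) / (1 - Real.exp (-(j + 1) * d))

/-- The dominating terms. -/
noncomputable def hTerm (d : ℝ) (j : ℕ) : ℝ :=
  (j + 1 : ℝ) ^ 3 * (pTerm d j + pTerm d j ^ 2 + pTerm d j ^ 3)

lemma exp_lt_one_aux {d : ℝ} (hd : 0 < d) (j : ℕ) : Real.exp (-(j + 1) * d) < 1 := by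
  rw [Real.exp_lt_one_iff]
  have : (0 : ℝ) < (j + 1) * d := by positivity
  linarith

lemma pTerm_pos {d : ℝ} (hd : 0 < d) (j : ℕ) : 0 < pTerm d j :=
  div_pos (Real.exp_pos _) (by linarith [exp_lt_one_aux hd j])

lemma pTerm_mul_le {d : ℝ} (hd : 0 < d) (j : ℕ) :
    pTerm d j * ((j + 1) * d) ≤ Real.exp (-((j + 1) * d / 2)) := by
  have h1 := exp_lt_one_aux hd j
  set y : ℝ := (j + 1) * d with hy
  have hy0 : 0 < y := by positivity
  have hr : Real.exp (-(j + 1) * d) = Real.exp (-(y / 2)) ^ 2 := by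
    rw [← Real.exp_nat_mul]; congr 1; rw [hy]; push_cast; ring
  have hs : y / 2 ≤ Real.sinh (y / 2) := Real.self_le_sinh_iff.2 (by positivity)
  rw [Real.sinh_eq] at hs
  have ht : Real.exp (y / 2) * Real.exp (-(y / 2)) = 1 := by
    rw [← Real.exp_add]; simp
  unfold pTerm
  rw [hr] at h1 ⊢
  set s := Real.exp (-(y / 2))
  have hs0 : 0 < s := Real.exp_pos _
  rw [div_mul_eq_mul_div, div_le_iff₀ (by linarith)]
  have : y * s ≤ 1 - s ^ 2 := by
    nlinarith
  nlinarith

lemma pTerm_mul_le_one {d : ℝ} (hd : 0 < d) (j : ℕ) :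
    pTerm d j * ((j + 1) * d) ≤ 1 := by
  refine (pTerm_mul_le hd j).trans ?_
  rw [Real.exp_le_one_iff]
  have : (0 : ℝ) < (j + 1) * d := by positivity
  linarith

lemma hTerm_le {d : ℝ} (hd : 0 < d) (j : ℕ) :
    hTerm d j ≤ 73 / d ^ 3 * (Real.exp (-(d / 4)) * Real.exp (-(d / 4)) ^ j) := by
  have hp := pTerm_mul_le hd j
  have hp0 := pTerm_pos hd j
  have hh : hTerm d j * d ^ 3 = ((j + 1) * d) ^ 3 * (pTerm d j + pTerm d j ^ 2 + pTerm d j ^ 3) := by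
    unfold hTerm; ring
  have he : Real.exp (-(d / 4)) * Real.exp (-(d / 4)) ^ j = Real.exp (-((j + 1) * d / 8)) ^ 2 := by
    rw [← Real.exp_nat_mul, ← Real.exp_nat_mul, ← Real.exp_add]; congr 1; push_cast; ring
  have he2 : Real.exp (-((j + 1) * d / 2)) = Real.exp (-((j + 1) * d / 8)) ^ 4 := by
    rw [← Real.exp_nat_mul]; congr 1; push_cast; ring
  rw [he, div_mul_eq_mul_div, le_div_iff₀ (by positivity), hh]
  rw [he2] at hp
  set y : ℝ := (j + 1) * d with hy
  have hy0 : 0 < y := by positivity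
  set v := Real.exp (-(y / 8)) with hv
  have hv0 : 0 < v := Real.exp_pos _
  have hv1 : v ≤ 1 := by rw [hv, Real.exp_le_one_iff]; linarith
  have hyv : y * v ≤ 8 := by
    have h1 : y / 8 + 1 ≤ Real.exp (y / 8) := Real.add_one_le_exp _
    have h2 : Real.exp (y / 8) * v = 1 := by rw [hv, ← Real.exp_add]; simp
    nlinarith
  set p := pTerm d j
  have e1 : y ^ 3 * p ≤ 64 * v ^ 2 := by
    calc y ^ 3 * p = y ^ 2 * (p * y) := by ring
      _ ≤ y ^ 2 * v ^ 4 := by gcongr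
      _ = (y * v) ^ 2 * v ^ 2 := by ring
      _ ≤ 8 ^ 2 * v ^ 2 := by gcongr
      _ = 64 * v ^ 2 := by norm_num
  have e2 : y ^ 3 * p ^ 2 ≤ 8 * v ^ 2 := by
    calc y ^ 3 * p ^ 2 = y * (p * y) ^ 2 := by ring
      _ ≤ y * (v ^ 4) ^ 2 := by gcongr
      _ = (y * v) * v ^ 7 := by ring
      _ ≤ 8 * v ^ 2 := by
        have : v ^ 7 ≤ v ^ 2 := pow_le_pow_of_le_one hv0.le hv1 (by norm_num)
        gcongr
  have e3 : y ^ 3 * p ^ 3 ≤ v ^ 2 := by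
    calc y ^ 3 * p ^ 3 = (p * y) ^ 3 := by ring
      _ ≤ (v ^ 4) ^ 3 := by gcongr
      _ = v ^ 12 := by ring
      _ ≤ v ^ 2 := pow_le_pow_of_le_one hv0.le hv1 (by norm_num)
  nlinarith

lemma hTerm_nonneg {d : ℝ} (hd : 0 < d) (j : ℕ) : 0 ≤ hTerm d j := by
  have := pTerm_pos hd j
  unfold hTerm; positivity

lemma summable_geo {d : ℝ} (hd : 0 < d) :
    Summable fun j : ℕ => 73 / d ^ 3 * (Real.exp (-(d / 4)) * Real.exp (-(d / 4)) ^ j) := by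
  apply Summable.mul_left
  apply Summable.mul_left
  apply summable_geometric_of_lt_one (Real.exp_pos _).le
  rw [Real.exp_lt_one_iff]; linarith

lemma hTerm_summable {d : ℝ} (hd : 0 < d) : Summable (hTerm d) :=
  Summable.of_nonneg_of_le (hTerm_nonneg hd) (hTerm_le hd) (summable_geo hd)

lemma hTerm_tsum_le {d : ℝ} (hd : 0 < d) : ∑' j, hTerm d j ≤ 292 / d ^ 4 := by
  refine (Summable.tsum_le_tsum (hTerm_le hd) (hTerm_summable hd) (summable_geo hd)).trans ?_
  have hq1 : Real.exp (-(d / 4)) < 1 := by rw [Real.exp_lt_one_iff]; linarith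
  rw [tsum_mul_left, tsum_mul_left, tsum_geometric_of_lt_one (Real.exp_pos _).le hq1]
  have h1 : d / 4 + 1 ≤ Real.exp (d / 4) := Real.add_one_le_exp _
  have h2 : Real.exp (d / 4) * Real.exp (-(d / 4)) = 1 := by rw [← Real.exp_add]; simp
  set q := Real.exp (-(d / 4))
  have hq0 : 0 < q := Real.exp_pos _
  have h3 : q * (1 - q)⁻¹ ≤ 4 / d := by
    rw [← div_eq_mul_inv, div_le_div_iff₀ (by linarith) hd]
    nlinarith
  calc 73 / d ^ 3 * (q * (1 - q)⁻¹) ≤ 73 / d ^ 3 * (4 / d) := by gcongr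
    _ = 292 / d ^ 4 := by field_simp; norm_num

lemma aTerm_eq (d : ℝ) (j : ℕ) :
    (j + 1 : ℝ) * Real.exp (-(j + 1) * d) / (1 - Real.exp (-(j + 1) * d)) = (j + 1) * pTerm d j := by
  unfold pTerm; ring

lemma bTerm_eq {d : ℝ} (hd : 0 < d) (j : ℕ) :
    (j + 1 : ℝ) ^ 2 * Real.exp (-(j + 1) * d) / (1 - Real.exp (-(j + 1) * d)) ^ 2
      = (j + 1) ^ 2 * (pTerm d j + pTerm d j ^ 2) := by
  have := exp_lt_one_aux hd j
  have h : 1 - Real.exp (-(j + 1) * d) ≠ 0 := by linarith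
  unfold pTerm; field_simp; ring

lemma one_le_aux (j : ℕ) : (1 : ℝ) ≤ j + 1 := by
  have : (0 : ℝ) ≤ j := Nat.cast_nonneg j
  linarith

lemma pTerm_le_hTerm {d : ℝ} (hd : 0 < d) (j : ℕ) : pTerm d j ≤ hTerm d j := by
  have h := pTerm_pos hd j
  have h1 : (1 : ℝ) ≤ (j + 1 : ℝ) ^ 3 := one_le_pow₀ (one_le_aux j)
  unfold hTerm
  have : 0 ≤ pTerm d j ^ 2 + pTerm d j ^ 3 := by positivity
  nlinarith

lemma aTerm_le_hTerm {d : ℝ} (hd : 0 < d) (j : ℕ) : (j + 1) * pTerm d j ≤ hTerm d j := by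
  have h := pTerm_pos hd j
  have h1 : (j + 1 : ℝ) ≤ (j + 1 : ℝ) ^ 3 := le_self_pow₀ (one_le_aux j) (by norm_num)
  have : 0 ≤ pTerm d j ^ 2 + pTerm d j ^ 3 := by positivity
  unfold hTerm
  gcongr
  linarith

lemma bTerm_le_hTerm {d : ℝ} (hd : 0 < d) (j : ℕ) :
    (j + 1) ^ 2 * (pTerm d j + pTerm d j ^ 2) ≤ hTerm d j := by
  have h := pTerm_pos hd j
  have h1 : (j + 1 : ℝ) ^ 2 ≤ (j + 1 : ℝ) ^ 3 := pow_le_pow_right₀ (one_le_aux j) (by norm_num)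
  have : 0 ≤ pTerm d j ^ 3 := by positivity
  unfold hTerm
  exact mul_le_mul h1 (by linarith) (by positivity) (by positivity)

lemma aFun_hasSum {d : ℝ} (hd : 0 < d) : HasSum (fun j : ℕ => (j + 1) * pTerm d j) (aFun d) := by
  have hs : Summable (fun j : ℕ => (j + 1) * pTerm d j) :=
    Summable.of_nonneg_of_le (fun j => by have := pTerm_pos hd j; positivity)
      (aTerm_le_hTerm hd) (hTerm_summable hd)
  have := hs.hasSum
  unfold aFun
  simp_rw [aTerm_eq]
  exact this

lemma bFun_hasSum {d : ℝ} (hd : 0 < d) :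
    HasSum (fun j : ℕ => (j + 1) ^ 2 * (pTerm d j + pTerm d j ^ 2)) (bFun d) := by
  have hs : Summable (fun j : ℕ => (j + 1 : ℝ) ^ 2 * (pTerm d j + pTerm d j ^ 2)) :=
    Summable.of_nonneg_of_le (fun j => by have := pTerm_pos hd j; positivity)
      (bTerm_le_hTerm hd) (hTerm_summable hd)
  have := hs.hasSum
  unfold bFun
  simp_rw [bTerm_eq hd]
  exact this

lemma aFun_le {d : ℝ} (hd : 0 < d) : aFun d ≤ 292 / d ^ 4 := by
  rw [← (aFun_hasSum hd).tsum_eq]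
  exact (Summable.tsum_le_tsum (aTerm_le_hTerm hd) (aFun_hasSum hd).summable
    (hTerm_summable hd)).trans (hTerm_tsum_le hd)

lemma exp_I_two (x : ℝ) : ‖Complex.exp (Complex.I * x) - 1 - Complex.I * x‖ ≤ 2 * |x| ^ 2 := by
  have hn : ‖Complex.I * (x : ℂ)‖ = |x| := by simp
  rcases le_or_gt |x| 1 with h | h
  · have := Complex.norm_exp_sub_one_sub_id_le (x := Complex.I * x) (by rw [hn]; exact h)
    rw [hn] at this
    nlinarith [sq_nonneg |x|]
  · have h1 := Real.norm_exp_I_mul_ofReal_sub_one_le (x := x)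
    have h2 := norm_sub_le (Complex.exp (Complex.I * x) - 1) (Complex.I * x)
    rw [hn] at h2
    rw [Real.norm_eq_abs] at h1
    nlinarith

lemma exp_I_three (x : ℝ) :
    ‖Complex.exp (Complex.I * x) - 1 - Complex.I * x + x ^ 2 / 2‖ ≤ 3 * |x| ^ 3 := by
  have hn : ‖Complex.I * (x : ℂ)‖ = |x| := by simp
  rcases le_or_gt |x| 1 with h | h
  · have := Complex.exp_bound (x := Complex.I * x) (by rw [hn]; exact h) (n := 3) (by norm_num)
    rw [hn] at this
    have e : Complex.exp (Complex.I * x) - ∑ m ∈ Finset.range 3, (Complex.I * x) ^ m / m.factorial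
        = Complex.exp (Complex.I * x) - 1 - Complex.I * x + x ^ 2 / 2 := by
      simp [Finset.sum_range_succ, Nat.factorial, mul_pow]; ring
    rw [e] at this
    refine this.trans ?_
    have h0 : 0 ≤ |x| ^ 3 := by positivity
    norm_num [Nat.factorial]
    linarith
  · have h1 := exp_I_two x
    have h2 := norm_add_le (Complex.exp (Complex.I * x) - 1 - Complex.I * x) ((x : ℂ) ^ 2 / 2)
    have h3 : ‖(x : ℂ) ^ 2 / 2‖ = |x| ^ 2 / 2 := by simp
    rw [h3] at h2
    have h4 : |x| ^ 2 ≤ |x| ^ 3 := pow_le_pow_right₀ h.le (by norm_num)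
    nlinarith

lemma log_key (p x : ℝ) (hp : 0 ≤ p) (hpx : p * |x| ≤ 1 / 2) :
    ‖Complex.log (1 - p * (Complex.exp (Complex.I * x) - 1))⁻¹
        - (Complex.I * (p * x) - (p + p ^ 2) * x ^ 2 / 2)‖ ≤ 4 * |x| ^ 3 * (p + p ^ 2 + p ^ 3) := by
  set u := Complex.exp (Complex.I * x) - 1 with hu
  have hu1 : ‖u‖ ≤ |x| := by
    simpa [hu] using Real.norm_exp_I_mul_ofReal_sub_one_le (x := x)
  set w : ℂ := p * u with hw
  have hw1 : ‖w‖ ≤ p * |x| := by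
    rw [hw, norm_mul, Complex.norm_real, Real.norm_of_nonneg hp]; gcongr
  have hw2 : ‖w‖ ≤ 1 / 2 := hw1.trans hpx
  have hL := Complex.norm_log_one_sub_inv_add_logTaylor_neg_le 2 (z := w) (by linarith)
  have hT : Complex.logTaylor (2 + 1) (-w) = -w - w ^ 2 / 2 := by
    simp [Complex.logTaylor_succ, Complex.logTaylor_zero]; ring
  rw [hT] at hL
  have hL2 : ‖Complex.log (1 - w)⁻¹ + (-w - w ^ 2 / 2)‖ ≤ p ^ 3 * |x| ^ 3 := by
    refine hL.trans ?_
    have hi : (1 - ‖w‖)⁻¹ ≤ 2 := by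
      rw [inv_le_comm₀ (by linarith) (by norm_num)]; linarith
    calc ‖w‖ ^ (2 + 1) * (1 - ‖w‖)⁻¹ / ((2 : ℕ) + 1) ≤ (p * |x|) ^ (2 + 1) * 2 / ((2 : ℕ) + 1) := by
          have : 0 ≤ (1 - ‖w‖)⁻¹ := inv_nonneg.2 (by linarith)
          gcongr
      _ ≤ p ^ 3 * |x| ^ 3 := by
          have : 0 ≤ p ^ 3 * |x| ^ 3 := by positivity
          push_cast
          nlinarith
  have h2 := exp_I_two x
  have h3 := exp_I_three x
  rw [← hu] at h2 h3
  have h4 : ‖u + Complex.I * x‖ ≤ 2 * |x| := by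
    refine (norm_add_le _ _).trans ?_
    have hn : ‖Complex.I * (x : ℂ)‖ = |x| := by simp
    rw [hn]; linarith
  have e : Complex.log (1 - w)⁻¹ - (Complex.I * (p * x) - (p + p ^ 2) * x ^ 2 / 2)
      = (Complex.log (1 - w)⁻¹ + (-w - w ^ 2 / 2)) + p * (u - Complex.I * x + x ^ 2 / 2)
        + p ^ 2 / 2 * ((u - Complex.I * x) * (u + Complex.I * x)) := by
    rw [hw]
    linear_combination ((p : ℂ) ^ 2 * x ^ 2 / 2) * Complex.I_sq
  rw [e]
  refine (norm_add₃_le).trans ?_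
  have n2 : ‖(p : ℂ) * (u - Complex.I * x + x ^ 2 / 2)‖ ≤ p * (3 * |x| ^ 3) := by
    rw [norm_mul, Complex.norm_real, Real.norm_of_nonneg hp]; gcongr
  have n3 : ‖(p : ℂ) ^ 2 / 2 * ((u - Complex.I * x) * (u + Complex.I * x))‖
      ≤ p ^ 2 / 2 * (2 * |x| ^ 2 * (2 * |x|)) := by
    rw [norm_mul, norm_mul]
    have : ‖(p : ℂ) ^ 2 / 2‖ = p ^ 2 / 2 := by simp
    rw [this]; gcongr
  have q1 : 0 ≤ |x| ^ 3 * p := by positivity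
  have q2 : 0 ≤ |x| ^ 3 * p ^ 2 := by positivity
  have q3 : 0 ≤ |x| ^ 3 * p ^ 3 := by positivity
  nlinarith

/-- The real product is a positive exponential. -/
lemma gR_hasSum {d : ℝ} (hd : 0 < d) :
    Summable (fun j : ℕ => -Real.log (1 - Real.exp (-(j + 1) * d))) := by
  refine Summable.of_nonneg_of_le (fun j => ?_) (fun j => ?_) (hTerm_summable hd)
  · have h1 := exp_lt_one_aux hd j
    have := Real.log_nonpos (x := 1 - Real.exp (-(j + 1) * d)) (by linarith)
      (by linarith [Real.exp_pos (-(j + 1) * d)])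
    linarith
  · refine le_trans ?_ (pTerm_le_hTerm hd j)
    have h1 := exp_lt_one_aux hd j
    have h2 : (0 : ℝ) < 1 - Real.exp (-(j + 1) * d) := by linarith
    have := Real.log_le_sub_one_of_pos (inv_pos.2 h2)
    rw [Real.log_inv] at this
    refine this.trans (le_of_eq ?_)
    unfold pTerm
    rw [eq_div_iff h2.ne', sub_mul, inv_mul_cancel₀ h2.ne']
    ring

lemma ratio_formula {d θ : ℝ} (hd : 0 < d) (hθ : |θ| ≤ d / 2) :
    ∃ E : ℂ, ‖E‖ ≤ 4 * |θ| ^ 3 * (292 / d ^ 4) ∧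
      gC (Complex.exp (-(d : ℂ) + θ * Complex.I)) / (gR (Real.exp (-d)) : ℂ) =
        Complex.exp (Complex.I * (θ * aFun d) - θ ^ 2 * bFun d / 2 + E) := by
  set M : ℕ → ℂ := fun j => Complex.I * (pTerm d j * ((j + 1 : ℝ) * θ : ℝ))
    - (pTerm d j + pTerm d j ^ 2) * ((j + 1 : ℝ) * θ : ℝ) ^ 2 / 2 with hM
  set L : ℕ → ℂ := fun j =>
    Complex.log (1 - pTerm d j * (Complex.exp (Complex.I * ((j + 1 : ℝ) * θ : ℝ)) - 1))⁻¹ with hLdef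
  have hMs : HasSum M (Complex.I * (θ * aFun d) - θ ^ 2 * bFun d / 2) := by
    have ha := (Complex.hasSum_ofReal.2 (aFun_hasSum hd)).mul_left (Complex.I * θ)
    have hb := (Complex.hasSum_ofReal.2 (bFun_hasSum hd)).mul_left ((θ : ℂ) ^ 2 / 2)
    convert! ha.sub hb using 1
    · funext j; simp only [hM]; push_cast; ring
    · ring
  have hsmall : ∀ j : ℕ, pTerm d j * |(j + 1 : ℝ) * θ| ≤ 1 / 2 := by
    intro j
    have h1 := pTerm_mul_le_one hd j
    have h0 := pTerm_pos hd j
    rw [abs_mul, abs_of_pos (by positivity : (0 : ℝ) < j + 1)]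
    calc pTerm d j * ((j + 1) * |θ|) ≤ pTerm d j * ((j + 1) * (d / 2)) := by gcongr
      _ = pTerm d j * ((j + 1) * d) / 2 := by ring
      _ ≤ 1 / 2 := by linarith
  have hE : ∀ j, ‖L j - M j‖ ≤ 4 * |θ| ^ 3 * hTerm d j := by
    intro j
    refine (log_key (pTerm d j) ((j + 1 : ℝ) * θ) (pTerm_pos hd j).le (hsmall j)).trans
      (le_of_eq ?_)
    rw [abs_mul, abs_of_pos (by positivity : (0 : ℝ) < j + 1)]
    unfold hTerm; ring
  have hHs : Summable fun j => 4 * |θ| ^ 3 * hTerm d j := (hTerm_summable hd).mul_left _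
  have hEs : Summable fun j => L j - M j := Summable.of_norm_bounded hHs hE
  refine ⟨∑' j, (L j - M j), ?_, ?_⟩
  · refine (tsum_of_norm_bounded hHs.hasSum hE).trans ?_
    rw [tsum_mul_left]
    have := hTerm_tsum_le hd
    gcongr
  · have hLs : HasSum L (Complex.I * (θ * aFun d) - θ ^ 2 * bFun d / 2 + ∑' j, (L j - M j)) := by
      convert! hMs.add hEs.hasSum using 1
      funext j; ring
    obtain ⟨S, hS⟩ := gR_hasSum hd
    have hgR : gR (Real.exp (-d)) = Real.exp S := by
      rw [← hS.rexp.tprod_eq]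
      unfold gR
      congr 1; funext j
      have h1 := exp_lt_one_aux hd j
      simp only [Function.comp]
      rw [Real.exp_neg (Real.log _), Real.exp_log (by linarith), ← Real.exp_nat_mul]
      congr 3; push_cast; ring
    have hprod := ((Complex.hasSum_ofReal.2 hS).add hLs).cexp
    have hgC : gC (Complex.exp (-(d : ℂ) + θ * Complex.I)) = Complex.exp (S +
        (Complex.I * (θ * aFun d) - θ ^ 2 * bFun d / 2 + ∑' j, (L j - M j))) := by
      rw [← hprod.tprod_eq]
      unfold gC
      congr 1; funext j
      have h1 := exp_lt_one_aux hd j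
      have h2 : (0 : ℝ) < 1 - Real.exp (-(j + 1) * d) := by linarith
      have h2' : (1 - (Real.exp (-(j + 1) * d) : ℂ)) ≠ 0 := by exact_mod_cast h2.ne'
      have hw : ‖(pTerm d j : ℂ) * (Complex.exp (Complex.I * ((j + 1 : ℝ) * θ : ℝ)) - 1)‖ < 1 := by
        have hu := Real.norm_exp_I_mul_ofReal_sub_one_le (x := (j + 1 : ℝ) * θ)
        have := hsmall j
        have h0 := pTerm_pos hd j
        rw [norm_mul, Complex.norm_real, Real.norm_of_nonneg h0.le]
        rw [Real.norm_eq_abs] at hu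
        nlinarith
      have hne : 1 - (pTerm d j : ℂ) * (Complex.exp (Complex.I * ((j + 1 : ℝ) * θ : ℝ)) - 1) ≠ 0 := by
        intro h
        rw [sub_eq_zero] at h
        rw [← h] at hw
        simp at hw
      simp only [Function.comp, hLdef]
      rw [Complex.exp_add _ (Complex.log _), Complex.exp_log (inv_ne_zero hne), ← Complex.ofReal_exp,
        Real.exp_neg (Real.log _), Real.exp_log h2, Complex.ofReal_inv, ← mul_inv]
      congr 1
      rw [← Complex.exp_nat_mul]
      have e1 : ((j + 1 : ℕ) : ℂ) * (-(d : ℂ) + θ * Complex.I)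
          = ((-(j + 1) * d : ℝ) : ℂ) + Complex.I * ((j + 1 : ℝ) * θ : ℝ) := by
        push_cast; ring
      rw [e1, Complex.exp_add, ← Complex.ofReal_exp]
      unfold pTerm
      rw [Complex.ofReal_div, Complex.ofReal_sub, Complex.ofReal_one]
      clear hne hw e1 h1 h2
      generalize (Real.exp (-(j + 1) * d) : ℂ) = R at h2' ⊢
      generalize Complex.exp (Complex.I * ((j + 1 : ℝ) * θ : ℝ)) = U
      field_simp
      ring
    rw [hgC, hgR, Complex.exp_add, ← Complex.ofReal_exp]
    have : (Real.exp S : ℂ) ≠ 0 := by exact_mod_cast (Real.exp_pos S).ne'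
    field_simp

/-- **Hayman's locality condition for the Euler product** (formula (24) of the paper):
with `d_n` solving `Σ_{j≥1} j·e^{−jd}/(1 − e^{−jd}) = n` and
`b_n = Σ_{j≥1} j²·e^{−j d_n}/(1 − e^{−j d_n})²`, for every `ω(n) → ∞`, uniformly for
`|θ| ≤ δ_n := d_n^{4/3}/ω(n)`,
`e^{−iθn}·g(e^{−d_n+iθ})/g(e^{−d_n}) = e^{−θ²b_n/2}·(1 + O(1/ω(n)³))`. -/
theorem euler_product_locality (d : ℕ → ℝ)
    (hd : ∀ n : ℕ, 0 < n → 0 < d n ∧ aFun (d n) = n) :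
    ∀ ω : ℕ → ℝ, Tendsto ω atTop atTop →
      ∃ C : ℝ, 0 < C ∧
        ∀ᶠ n : ℕ in atTop, ∀ θ : ℝ, |θ| ≤ d n ^ ((4 : ℝ) / 3) / ω n →
          ‖Complex.exp (-(θ * n) * Complex.I) *
                gC (Complex.exp (-(d n : ℂ) + θ * Complex.I)) / (gR (Real.exp (-(d n))) : ℂ)
              - (Real.exp (-θ ^ 2 * bFun (d n) / 2) : ℂ)‖
            ≤ C * Real.exp (-θ ^ 2 * bFun (d n) / 2) / ω n ^ 3 := by
  intro ω hω
  refine ⟨2336, by norm_num, ?_⟩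
  filter_upwards [hω.eventually_ge_atTop 1168, eventually_gt_atTop 292] with n hωn hn θ hθ
  obtain ⟨hd0, hda⟩ := hd n (by omega)
  set D := d n with hD
  set W := ω n with hW
  have hW0 : 0 < W := by linarith
  have hn' : (292 : ℝ) < n := by exact_mod_cast hn
  have hD1 : D ≤ 1 := by
    by_contra hcon
    push Not at hcon
    have h1 := aFun_le hd0
    have h2 : 292 / D ^ 4 ≤ 292 := div_le_self (by norm_num) (one_le_pow₀ hcon.le)
    linarith
  have hpow : D ^ ((4 : ℝ) / 3) ≤ D := by
    have := Real.rpow_le_rpow_of_exponent_ge hd0 hD1 (by norm_num : (1 : ℝ) ≤ 4 / 3)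
    rwa [Real.rpow_one] at this
  have hθ2 : |θ| ≤ D / 2 := by
    refine hθ.trans ?_
    have : D ^ ((4 : ℝ) / 3) / W ≤ D / 2 := by
      apply div_le_div₀ hd0.le hpow (by norm_num) (by linarith)
    exact this
  obtain ⟨E, hE, hform⟩ := ratio_formula hd0 hθ2
  have hcube : (D ^ ((4 : ℝ) / 3)) ^ 3 = D ^ 4 := by
    rw [← Real.rpow_natCast, ← Real.rpow_mul hd0.le, ← Real.rpow_natCast]
    norm_num
  have hE2 : ‖E‖ ≤ 1168 / W ^ 3 := by
    refine hE.trans ?_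
    calc 4 * |θ| ^ 3 * (292 / D ^ 4) ≤ 4 * (D ^ ((4 : ℝ) / 3) / W) ^ 3 * (292 / D ^ 4) := by gcongr
      _ = 1168 / W ^ 3 := by
        rw [div_pow, hcube]; field_simp; norm_num
  have hE1 : ‖E‖ ≤ 1 := by
    refine hE2.trans ?_
    rw [div_le_one (by positivity)]
    exact hωn.trans (le_self_pow₀ (by linarith) (by norm_num))
  have key : Complex.exp (-(θ * n) * Complex.I) *
      gC (Complex.exp (-(D : ℂ) + θ * Complex.I)) / (gR (Real.exp (-D)) : ℂ)
        - (Real.exp (-θ ^ 2 * bFun D / 2) : ℂ)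
      = (Real.exp (-θ ^ 2 * bFun D / 2) : ℂ) * (Complex.exp E - 1) := by
    rw [mul_div_assoc, hform, ← Complex.exp_add, hda, mul_sub, mul_one, Complex.ofReal_exp,
      ← Complex.exp_add]
    congr 2
    push_cast
    ring
  rw [key, norm_mul, Complex.norm_real, Real.norm_of_nonneg (Real.exp_pos _).le]
  have h5 := Complex.norm_exp_sub_one_le hE1
  calc Real.exp (-θ ^ 2 * bFun D / 2) * ‖Complex.exp E - 1‖
      ≤ Real.exp (-θ ^ 2 * bFun D / 2) * (2 * (1168 / W ^ 3)) := by
        gcongr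
        linarith
    _ = 2336 * Real.exp (-θ ^ 2 * bFun D / 2) / W ^ 3 := by ring
end
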